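/- arXiv:0806.4139 — 2 statements merged into one kernel-verified Lean document; each statement's English description precedes it below -/
import Mathlib

section
/- Let r > 0 and let u be bounded and Δ_G-harmonic in B_r \ {0}, i.e. u ∈ C²(B_r \ {0}) with Δ_G u = 0 on B_r \ {0} and sup_{B_r \ {0}} |u| < ∞, where B_r is the Grushin ball of radius r centered at the origin. Then u extends to a Δ_G-harmonic function on B_r: there exists ũ ∈ C²(B_r) with Δ_G ũ = 0 on B_r and ũ = u on B_r \ {0}. -/
open MeasureTheory

/-- Partial derivative in `x`. -/
noncomputable def pX (u : ℝ × ℝ → ℝ) (p : ℝ × ℝ) : ℝ := deriv (fun x => u (x, p.2)) p.1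

/-- Partial derivative in `y`. -/
noncomputable def pY (u : ℝ × ℝ → ℝ) (p : ℝ × ℝ) : ℝ := deriv (fun y => u (p.1, y)) p.2

/-- Second partial derivative in `x`. -/
noncomputable def pXX (u : ℝ × ℝ → ℝ) (p : ℝ × ℝ) : ℝ :=
  deriv (deriv (fun x => u (x, p.2))) p.1

/-- Second partial derivative in `y`. -/
noncomputable def pYY (u : ℝ × ℝ → ℝ) (p : ℝ × ℝ) : ℝ :=
  deriv (deriv (fun y => u (p.1, y))) p.2

/-- The Grushin Laplacian `Δ_G u = ∂_xx u + x² ∂_yy u`. -/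
noncomputable def grushinLap (u : ℝ × ℝ → ℝ) (p : ℝ × ℝ) : ℝ := pXX u p + p.1 ^ 2 * pYY u p

/-- The Grushin norm `‖(x,y)‖ = (x⁴ + 4y²)^(1/4)`. -/
noncomputable def gNorm (p : ℝ × ℝ) : ℝ := (p.1 ^ 4 + 4 * p.2 ^ 2) ^ ((1 : ℝ) / 4)

/-- The Grushin ball of radius `R` centered at `c`. -/
def gBall (c : ℝ × ℝ) (R : ℝ) : Set (ℝ × ℝ) := {p | gNorm (p - c) < R}

/-!
Everything rests on estimates for bounded harmonic functions `v` that depend only on the supremum of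
`|v|`, whether or not `v` has isolated singularities. Doubling the variable `y`, the function
`D (x, p, q) = v (x, p) - v (x, q)` satisfies `∂_xx D + x² (∂_pp D + ∂_qq D) = 0` and vanishes for
`p = q`. On the wedge `q ≤ p` it is compared with an explicit barrier that is `O(p - q)` at a given
point; the singularities are absorbed by adding `ε` times a superharmonic function that is infinite
there and letting `ε → 0`. Hence `v` is Lipschitz in `y`.

The difference quotients of `v` in `y` are therefore again bounded solutions, with finitely many
singularities on the line `x = 0`, and the estimate can be iterated: it bounds `∂_y v` and
`∂_yy v`, the equation then bounds `∂_xx v`, and Landau's inequality bounds `∂_x v`. In the same way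
all partial derivatives of order at most two except `∂_xx` are Lipschitz near the singularity. They
have limits there, and so does `∂_xx v = -x² ∂_yy v`, so `v` extends as a `C²` function.
-/

open Filter Function Metric Set Topology

section OneVariable

theorem deriv_deriv_nonpos_of_isLocalMax {f : ℝ → ℝ} {a : ℝ} (hmax : IsLocalMax f a)
    (hcont : ContinuousAt f a) : deriv (deriv f) a ≤ 0 := by
  by_contra! hpos
  have hmin : IsLocalMin f a := isLocalMin_of_deriv_deriv_pos hpos hmax.deriv_eq_zero hcont
  have hconst : f =ᶠ[𝓝 a] fun _ => f a := by
    filter_upwards [hmax, hmin] with t hle hge using le_antisymm hle hge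
  simp [hconst.deriv.deriv_eq] at hpos

variable {f g : ℝ → ℝ} {a : ℝ}

theorem deriv_deriv_add (hf : ContDiffAt ℝ 2 f a) (hg : ContDiffAt ℝ 2 g a) :
    deriv (deriv fun t => f t + g t) a = deriv (deriv f) a + deriv (deriv g) a := by
  simpa only [iteratedDeriv_eq_iterate, iterate_succ, iterate_zero, comp_apply, id_eq]
    using iteratedDeriv_fun_add (n := 2) hf hg

theorem deriv_deriv_const_mul (c : ℝ) :
    deriv (deriv fun t => c * f t) a = c * deriv (deriv f) a := by
  simp only [deriv_const_mul_field']

theorem deriv_deriv_sub (hf : ContDiffAt ℝ 2 f a) (hg : ContDiffAt ℝ 2 g a) :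
    deriv (deriv fun t => f t - g t) a = deriv (deriv f) a - deriv (deriv g) a := by
  simpa only [iteratedDeriv_eq_iterate, iterate_succ, iterate_zero, comp_apply, id_eq]
    using iteratedDeriv_fun_sub (n := 2) hf hg

theorem deriv_deriv_of_eq_quartic {a b c : ℝ}
    (hf : ∀ s, f s = a * s ^ 4 + b * s ^ 2 + c * s + f 0) (t : ℝ) :
    deriv (deriv f) t = 12 * a * t ^ 2 + 2 * b := by
  have hderiv : deriv f = fun s => 4 * a * s ^ 3 + 2 * b * s + c := by
    funext s
    rw [funext hf]
    refine (((((hasDerivAt_pow 4 s).const_mul a).fun_add ((hasDerivAt_pow 2 s).const_mul b)).fun_add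
      ((hasDerivAt_id' s).const_mul c)).add_const (f 0)).deriv.trans ?_
    push_cast; ring
  rw [hderiv]
  refine ((((hasDerivAt_pow 3 t).const_mul (4 * a)).fun_add
    ((hasDerivAt_id' t).const_mul (2 * b))).add_const c).deriv.trans ?_
  push_cast; ring

theorem deriv_deriv_rpow_const {s : ℝ} (hf : ContDiffAt ℝ 2 f a) (hpos : 0 < f a) :
    deriv (deriv fun t => f t ^ s) a =
      s * (s - 1) * f a ^ (s - 2) * deriv f a ^ 2 + s * f a ^ (s - 1) * deriv (deriv f) a := by
  have hchain := iteratedDeriv_comp_two (g := fun y : ℝ => y ^ s)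
    (Real.contDiffAt_rpow_const_of_ne hpos.ne') hf
  have hsnd : deriv (deriv fun y : ℝ => y ^ s) (f a) = s * (s - 1) * f a ^ (s - 2) := by
    rw [Real.deriv_rpow_const', deriv_const_mul_field, Real.deriv_rpow_const]
    ring_nf
  simp only [iteratedDeriv_eq_iterate, iterate_succ, iterate_zero, comp_apply, id_eq, hsnd,
    Real.deriv_rpow_const] at hchain
  exact hchain

/-- Landau's interpolation inequality. -/
theorem abs_deriv_le_of_abs_deriv_deriv_le {f f' f'' : ℝ → ℝ} {x ℓ M N : ℝ} (hℓ : 0 < ℓ)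
    (hf : ∀ t ∈ Icc x (x + ℓ), HasDerivAt f (f' t) t)
    (hf' : ∀ t ∈ Icc x (x + ℓ), HasDerivAt f' (f'' t) t)
    (hM : ∀ t ∈ Icc x (x + ℓ), |f t| ≤ M) (hN : ∀ t ∈ Icc x (x + ℓ), |f'' t| ≤ N) :
    |f' x| ≤ 2 * M / ℓ + N * ℓ := by
  have hleft : x ∈ Icc x (x + ℓ) := left_mem_Icc.2 (by linarith)
  have hright : x + ℓ ∈ Icc x (x + ℓ) := right_mem_Icc.2 (by linarith)
  obtain ⟨ξ, hξ, hslope⟩ := exists_hasDerivAt_eq_slope f f' (by linarith : x < x + ℓ)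
    (fun t ht => (hf t ht).continuousAt.continuousWithinAt)
    (fun t ht => hf t (Ioo_subset_Icc_self ht))
  have hξ_le : |f' ξ| ≤ 2 * M / ℓ := by
    rw [hslope, add_sub_cancel_left, abs_div, abs_of_pos hℓ]
    gcongr
    linarith [abs_sub (f (x + ℓ)) (f x), hM x hleft, hM _ hright]
  have hdiff : |f' x - f' ξ| ≤ N * |x - ξ| :=
    (convex_Icc x (x + ℓ)).norm_image_sub_le_of_norm_hasDerivWithin_le
      (fun t ht => (hf' t ht).hasDerivWithinAt) hN (Ioo_subset_Icc_self hξ) hleft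
  have hdist : |x - ξ| ≤ ℓ := abs_le.2 ⟨by linarith [hξ.2], by linarith [hξ.1]⟩
  have hN0 : 0 ≤ N := (abs_nonneg _).trans (hN x hleft)
  calc |f' x| ≤ |f' ξ| + |f' x - f' ξ| := by linarith [abs_sub_abs_le_abs_sub (f' x) (f' ξ)]
    _ ≤ 2 * M / ℓ + N * ℓ := add_le_add hξ_le (hdiff.trans (by gcongr))

end OneVariable

section PartialDerivatives

variable {u : ℝ × ℝ → ℝ} {z : ℝ × ℝ} {n : WithTop ℕ∞}

theorem contDiffAt_slice_fst (hu : ContDiffAt ℝ n u z) :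
    ContDiffAt ℝ n (fun x => u (x, z.2)) z.1 :=
  ContDiffAt.comp z.1 (f := fun x => (x, z.2)) hu (by fun_prop)

theorem contDiffAt_slice_snd (hu : ContDiffAt ℝ n u z) :
    ContDiffAt ℝ n (fun y => u (z.1, y)) z.2 :=
  ContDiffAt.comp z.2 (f := fun y => (z.1, y)) hu (by fun_prop)

theorem hasDerivAt_pX (hu : DifferentiableAt ℝ u z) :
    HasDerivAt (fun x => u (x, z.2)) (pX u z) z.1 :=
  (DifferentiableAt.comp z.1 (f := fun x => (x, z.2)) hu (by fun_prop)).hasDerivAt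

theorem hasDerivAt_pY (hu : DifferentiableAt ℝ u z) :
    HasDerivAt (fun y => u (z.1, y)) (pY u z) z.2 :=
  (DifferentiableAt.comp z.2 (f := fun y => (z.1, y)) hu (by fun_prop)).hasDerivAt

theorem pX_eq_fderiv (hu : DifferentiableAt ℝ u z) : pX u z = fderiv ℝ u z (1, 0) :=
  (HasFDerivAt.comp_hasDerivAt z.1 (f := fun x => (x, z.2)) hu.hasFDerivAt
    ((hasDerivAt_id z.1).prodMk (hasDerivAt_const z.1 z.2))).deriv

theorem pY_eq_fderiv (hu : DifferentiableAt ℝ u z) : pY u z = fderiv ℝ u z (0, 1) :=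
  (HasFDerivAt.comp_hasDerivAt z.2 (f := fun y => (z.1, y)) hu.hasFDerivAt
    ((hasDerivAt_const z.2 z.1).prodMk (hasDerivAt_id z.2))).deriv

theorem fderiv_eq_pX_smul_add_pY_smul (hu : DifferentiableAt ℝ u z) :
    fderiv ℝ u z = pX u z • ContinuousLinearMap.fst ℝ ℝ ℝ +
      pY u z • ContinuousLinearMap.snd ℝ ℝ ℝ := by
  ext <;> simp [pX_eq_fderiv hu, pY_eq_fderiv hu]

theorem eventually_differentiableAt (hu : ContDiffAt ℝ n u z) (hn : 1 ≤ n) :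
    ∀ᶠ w in 𝓝 z, DifferentiableAt ℝ u w :=
  ((hu.of_le hn).eventually (by simp)).mono fun _ hw => hw.differentiableAt one_ne_zero

theorem contDiffAt_pX (hu : ContDiffAt ℝ (n + 1) u z) : ContDiffAt ℝ n (pX u) z :=
  ((hu.fderiv_right le_rfl).clm_apply contDiffAt_const).congr_of_eventuallyEq
    ((eventually_differentiableAt hu le_add_self).mono fun _ hw => pX_eq_fderiv hw)

theorem contDiffAt_pY (hu : ContDiffAt ℝ (n + 1) u z) : ContDiffAt ℝ n (pY u) z :=
  ((hu.fderiv_right le_rfl).clm_apply contDiffAt_const).congr_of_eventuallyEq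
    ((eventually_differentiableAt hu le_add_self).mono fun _ hw => pY_eq_fderiv hw)

theorem pX_pY_eq_pY_pX (hu : ContDiffAt ℝ 2 u z) : pX (pY u) z = pY (pX u) z := by
  have hu1 : ContDiffAt ℝ (1 + 1) u z := by simpa [one_add_one_eq_two] using hu
  have hfderiv : DifferentiableAt ℝ (fderiv ℝ u) z :=
    (hu1.fderiv_right le_rfl).differentiableAt one_ne_zero
  have hdiff := eventually_differentiableAt hu1 le_add_self
  have hX : pX u =ᶠ[𝓝 z] fun w => fderiv ℝ u w (1, 0) := hdiff.mono fun _ => pX_eq_fderiv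
  have hY : pY u =ᶠ[𝓝 z] fun w => fderiv ℝ u w (0, 1) := hdiff.mono fun _ => pY_eq_fderiv
  rw [pX_eq_fderiv ((contDiffAt_pY hu1).differentiableAt one_ne_zero),
    pY_eq_fderiv ((contDiffAt_pX hu1).differentiableAt one_ne_zero), hX.fderiv_eq, hY.fderiv_eq]
  simpa [fderiv_clm_apply hfderiv] using hu.isSymmSndFDerivAt (by simp) (1, 0) (0, 1)

end PartialDerivatives

section GrushinLaplacian

variable {u v : ℝ × ℝ → ℝ} {z : ℝ × ℝ}

theorem grushinLap_congr (h : u =ᶠ[𝓝 z] v) : grushinLap u z = grushinLap v z := by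
  have hx : (fun x => u (x, z.2)) =ᶠ[𝓝 z.1] fun x => v (x, z.2) :=
    (by fun_prop : Continuous fun x => (x, z.2)).continuousAt.eventually h
  have hy : (fun y => u (z.1, y)) =ᶠ[𝓝 z.2] fun y => v (z.1, y) :=
    (by fun_prop : Continuous fun y => (z.1, y)).continuousAt.eventually h
  simp only [grushinLap, pXX, pYY, hx.deriv.deriv_eq, hy.deriv.deriv_eq]

theorem grushinLap_add (hu : ContDiffAt ℝ 2 u z) (hv : ContDiffAt ℝ 2 v z) :
    grushinLap (fun w => u w + v w) z = grushinLap u z + grushinLap v z := by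
  simp only [grushinLap, pXX, pYY,
    deriv_deriv_add (contDiffAt_slice_fst hu) (contDiffAt_slice_fst hv),
    deriv_deriv_add (contDiffAt_slice_snd hu) (contDiffAt_slice_snd hv)]
  ring

theorem grushinLap_sub (hu : ContDiffAt ℝ 2 u z) (hv : ContDiffAt ℝ 2 v z) :
    grushinLap (fun w => u w - v w) z = grushinLap u z - grushinLap v z := by
  simp only [grushinLap, pXX, pYY,
    deriv_deriv_sub (contDiffAt_slice_fst hu) (contDiffAt_slice_fst hv),
    deriv_deriv_sub (contDiffAt_slice_snd hu) (contDiffAt_slice_snd hv)]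
  ring

theorem grushinLap_const_mul (c : ℝ) (u : ℝ × ℝ → ℝ) (z : ℝ × ℝ) :
    grushinLap (fun w => c * u w) z = c * grushinLap u z := by
  simp only [grushinLap, pXX, pYY, deriv_deriv_const_mul]
  ring

theorem grushinLap_comp_add_snd (u : ℝ × ℝ → ℝ) (h : ℝ) (z : ℝ × ℝ) :
    grushinLap (fun w => u (w.1, w.2 + h)) z = grushinLap u (z.1, z.2 + h) := by
  have hshift : (deriv fun y => u (z.1, y + h)) = fun y => deriv (fun y => u (z.1, y)) (y + h) :=
    funext fun y => deriv_comp_add_const (fun y => u (z.1, y)) h y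
  simp only [grushinLap, pXX, pYY, hshift]
  rw [deriv_comp_add_const]

theorem continuousAt_grushinLap (hu : ContDiffAt ℝ 2 u z) : ContinuousAt (grushinLap u) z := by
  have hu1 : ContDiffAt ℝ (0 + 1 + 1) u z := by simpa [one_add_one_eq_two] using hu
  exact (contDiffAt_pX (contDiffAt_pX hu1)).continuousAt.add
    ((continuousAt_fst.pow 2).mul (contDiffAt_pY (contDiffAt_pY hu1)).continuousAt)

end GrushinLaplacian

section MaximumPrinciple

variable {X : Type*} [TopologicalSpace X] {K U Z : Set X} {F : X → ℝ}

theorem continuousOn_piecewise_zero_max_zero [DecidablePred (· ∈ Z)] (hZ : IsClosed Z)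
    (hF : ContinuousOn F (K \ Z)) (hpole : ∀ t ∈ K ∩ Z, Tendsto F (𝓝[K \ Z] t) atBot) :
    ContinuousOn (Z.piecewise (fun _ => 0) fun t => max (F t) 0) K := by
  intro t ht
  by_cases htZ : t ∈ Z
  · have hoff : Z.piecewise (fun _ => 0) (fun t => max (F t) 0) =ᶠ[𝓝[K \ Z] t] fun _ => 0 := by
      filter_upwards [self_mem_nhdsWithin, (hpole t ⟨ht, htZ⟩).eventually_le_atBot 0] with s hs hle
      rw [piecewise_eq_of_notMem _ _ _ hs.2, max_eq_right hle]
    have hon : Z.piecewise (fun _ => 0) (fun t => max (F t) 0) =ᶠ[𝓝[K ∩ Z] t] fun _ => 0 := by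
      filter_upwards [self_mem_nhdsWithin] with s hs using piecewise_eq_of_mem _ _ _ hs.2
    rw [ContinuousWithinAt, piecewise_eq_of_mem _ _ _ htZ, ← sdiff_union_inter K Z,
      nhdsWithin_union]
    exact (tendsto_const_nhds.congr' hoff.symm).sup (tendsto_const_nhds.congr' hon.symm)
  · have hoff : Z.piecewise (fun _ => 0) (fun t => max (F t) 0) =ᶠ[𝓝[K] t]
        fun s => max (F s) 0 := by
      filter_upwards [nhdsWithin_le_nhds (hZ.isOpen_compl.mem_nhds htZ)] with s hs
        using piecewise_eq_of_notMem _ _ _ hs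
    have hFK : ContinuousWithinAt F K t := (hF t ⟨ht, htZ⟩).mono_of_mem_nhdsWithin
      (inter_mem_nhdsWithin K (hZ.isOpen_compl.mem_nhds htZ))
    exact ContinuousWithinAt.congr_of_eventuallyEq (Tendsto.max hFK tendsto_const_nhds) hoff
      (piecewise_eq_of_notMem _ _ _ htZ)

theorem nonpos_of_forall_not_isLocalMax (hK : IsCompact K) (hU : IsOpen U) (hUK : U ⊆ K)
    (hZ : IsClosed Z) (hF : ContinuousOn F (K \ Z))
    (hpole : ∀ t ∈ K ∩ Z, Tendsto F (𝓝[K \ Z] t) atBot)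
    (hbdry : ∀ t ∈ K \ (U ∪ Z), F t ≤ 0) (hint : ∀ t ∈ U \ Z, ¬IsLocalMax F t) :
    ∀ t ∈ K \ Z, F t ≤ 0 := by
  classical
  -- Since `F` tends to `-∞` at `Z`, its positive part extends continuously by zero across `Z`.
  set G : X → ℝ := Z.piecewise (fun _ => 0) (fun t => max (F t) 0)
  have hG_off {t} (ht : t ∉ Z) : G t = max (F t) 0 := piecewise_eq_of_notMem _ _ _ ht
  have hG_on {t} (ht : t ∈ Z) : G t = 0 := piecewise_eq_of_mem _ _ _ ht
  have hG : ContinuousOn G K := continuousOn_piecewise_zero_max_zero hZ hF hpole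
  intro t ht
  by_contra! hpos
  obtain ⟨m, hmK, hmax⟩ := hK.exists_isMaxOn ⟨t, ht.1⟩ hG
  have hGm : 0 < G m := (by rw [hG_off ht.2]; exact lt_max_of_lt_left hpos : 0 < G t).trans_le
    (hmax ht.1)
  have hmZ : m ∉ Z := fun hm => hGm.ne' (hG_on hm)
  have hFm : G m = F m := by
    rw [hG_off hmZ] at hGm ⊢
    exact max_eq_left ((lt_max_iff.1 hGm).resolve_right (lt_irrefl 0)).le
  have hmU : m ∈ U := by
    by_contra hmU
    exact (hFm ▸ hGm).not_ge (hbdry m ⟨hmK, fun h => h.elim hmU hmZ⟩)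
  refine hint m ⟨hmU, hmZ⟩ ?_
  filter_upwards [hU.mem_nhds hmU, hZ.isOpen_compl.mem_nhds hmZ] with s hsU hsZ
  calc F s ≤ G s := by rw [hG_off hsZ]; exact le_max_left _ _
    _ ≤ F m := hFm ▸ hmax (hUK hsU)

/-- The operator `∂_xx + x² (∂_pp + ∂_qq)` in the variables `(x, p, q)`. It is the Grushin Laplacian
with the variable `y` doubled: it annihilates `w (x, p)` and `w (x, q)` whenever `w` is harmonic. -/
noncomputable def doubledGrushinLap (F : ℝ × ℝ × ℝ → ℝ) (t : ℝ × ℝ × ℝ) : ℝ :=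
  deriv (deriv fun x => F (x, t.2)) t.1 + t.1 ^ 2 *
    (deriv (deriv fun p => F (t.1, p, t.2.2)) t.2.1 +
      deriv (deriv fun q => F (t.1, t.2.1, q)) t.2.2)

section DoubledOperator

variable {F G : ℝ × ℝ × ℝ → ℝ} {t : ℝ × ℝ × ℝ}

theorem doubledGrushinLap_nonpos_of_isLocalMax (hmax : IsLocalMax F t) (hF : ContinuousAt F t) :
    doubledGrushinLap F t ≤ 0 := by
  have hslice {e : ℝ → ℝ × ℝ × ℝ} (he : Continuous e) {s : ℝ} (hs : e s = t) :
      deriv (deriv fun r => F (e r)) s ≤ 0 := by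
    subst hs
    exact deriv_deriv_nonpos_of_isLocalMax (he.continuousAt.eventually hmax)
      (hF.comp he.continuousAt)
  exact add_nonpos (hslice (e := fun x => (x, t.2)) (by fun_prop) rfl)
    (mul_nonpos_of_nonneg_of_nonpos (sq_nonneg _)
      (add_nonpos (hslice (e := fun p => (t.1, p, t.2.2)) (by fun_prop) rfl)
        (hslice (e := fun q => (t.1, t.2.1, q)) (by fun_prop) rfl)))

theorem doubledGrushinLap_add (hF : ContDiffAt ℝ 2 F t) (hG : ContDiffAt ℝ 2 G t) :
    doubledGrushinLap (fun s => F s + G s) t = doubledGrushinLap F t + doubledGrushinLap G t := by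
  have hslice {f : ℝ × ℝ × ℝ → ℝ} (hf : ContDiffAt ℝ 2 f t) :
      ContDiffAt ℝ 2 (fun x => f (x, t.2)) t.1 ∧
      ContDiffAt ℝ 2 (fun p => f (t.1, p, t.2.2)) t.2.1 ∧
      ContDiffAt ℝ 2 (fun q => f (t.1, t.2.1, q)) t.2.2 :=
    ⟨ContDiffAt.comp t.1 (f := fun x => (x, t.2)) hf (by fun_prop),
      ContDiffAt.comp t.2.1 (f := fun p => (t.1, p, t.2.2)) hf (by fun_prop),
      ContDiffAt.comp t.2.2 (f := fun q => (t.1, t.2.1, q)) hf (by fun_prop)⟩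
  obtain ⟨hFx, hFp, hFq⟩ := hslice hF
  obtain ⟨hGx, hGp, hGq⟩ := hslice hG
  simp only [doubledGrushinLap, deriv_deriv_add hFx hGx, deriv_deriv_add hFp hGp,
    deriv_deriv_add hFq hGq]
  ring

theorem doubledGrushinLap_const_mul (c : ℝ) (F : ℝ × ℝ × ℝ → ℝ) (t : ℝ × ℝ × ℝ) :
    doubledGrushinLap (fun s => c * F s) t = c * doubledGrushinLap F t := by
  simp only [doubledGrushinLap, deriv_deriv_const_mul]
  ring

theorem doubledGrushinLap_sub (hF : ContDiffAt ℝ 2 F t) (hG : ContDiffAt ℝ 2 G t) :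
    doubledGrushinLap (fun s => F s - G s) t = doubledGrushinLap F t - doubledGrushinLap G t := by
  have hadd := doubledGrushinLap_add hF (contDiffAt_const (c := (-1 : ℝ)).mul hG)
  rw [doubledGrushinLap_const_mul] at hadd
  simpa only [neg_one_mul, ← sub_eq_add_neg] using hadd

theorem doubledGrushinLap_comp_fst (w : ℝ × ℝ → ℝ) (t : ℝ × ℝ × ℝ) :
    doubledGrushinLap (fun s => w (s.1, s.2.1)) t = grushinLap w (t.1, t.2.1) := by
  simp [doubledGrushinLap, grushinLap, pXX, pYY]

theorem doubledGrushinLap_comp_snd (w : ℝ × ℝ → ℝ) (t : ℝ × ℝ × ℝ) :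
    doubledGrushinLap (fun s => w (s.1, s.2.2)) t = grushinLap w (t.1, t.2.2) := by
  simp [doubledGrushinLap, grushinLap, pXX, pYY]

theorem nonpos_of_doubledGrushinLap_nonneg {K U Z : Set (ℝ × ℝ × ℝ)} {D E : ℝ × ℝ × ℝ → ℝ} {m : ℝ}
    (hK : IsCompact K) (hU : IsOpen U) (hUK : U ⊆ K) (hZ : IsClosed Z)
    (hD : ∀ t ∈ K \ Z, ContDiffAt ℝ 2 D t) (hE : ∀ t ∈ K \ Z, ContDiffAt ℝ 2 E t)
    (hDlap : ∀ t ∈ U \ Z, 0 ≤ doubledGrushinLap D t)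
    (hElap : ∀ t ∈ U \ Z, doubledGrushinLap E t < 0)
    (hDbdry : ∀ t ∈ K \ (U ∪ Z), D t ≤ 0) (hDm : ∀ t ∈ K \ Z, D t ≤ m)
    (hE0 : ∀ t ∈ K \ Z, 0 ≤ E t) (hEpole : ∀ t ∈ K ∩ Z, Tendsto E (𝓝[K \ Z] t) atTop) :
    ∀ t ∈ K \ Z, D t ≤ 0 := by
  have hperturbed : ∀ ε > 0, ∀ t ∈ K \ Z, D t - ε * E t ≤ 0 := by
    intro ε hε
    have hreg : ∀ t ∈ K \ Z, ContDiffAt ℝ 2 (fun s => D s - ε * E s) t := fun t ht =>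
      (hD t ht).sub (contDiffAt_const.mul (hE t ht))
    refine nonpos_of_forall_not_isLocalMax hK hU hUK hZ
      (fun t ht => (hreg t ht).continuousAt.continuousWithinAt) (fun t ht => ?_) (fun t ht => ?_)
      (fun t ht hmax => ?_)
    · have hlim : Tendsto (fun s => m - ε * E s) (𝓝[K \ Z] t) atBot := by
        simpa only [sub_eq_add_neg, comp_apply] using tendsto_atBot_add_const_left _ m
          (tendsto_neg_atTop_atBot.comp ((hEpole t ht).const_mul_atTop hε))
      refine tendsto_atBot_mono' _ ?_ hlim
      filter_upwards [self_mem_nhdsWithin] with s hs using sub_le_sub_right (hDm s hs) _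
    · have htKZ : t ∈ K \ Z := ⟨ht.1, fun h => ht.2 (Or.inr h)⟩
      linarith [hDbdry t ht, mul_nonneg hε.le (hE0 t htKZ)]
    · have htKZ : t ∈ K \ Z := ⟨hUK ht.1, ht.2⟩
      have hlap := doubledGrushinLap_nonpos_of_isLocalMax hmax (hreg t htKZ).continuousAt
      rw [doubledGrushinLap_sub (hD t htKZ) (contDiffAt_const.mul (hE t htKZ)),
        doubledGrushinLap_const_mul] at hlap
      linarith [hDlap t ht, mul_pos_of_neg_of_neg (neg_lt_zero.2 hε) (hElap t ht)]
  intro t ht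
  have hlim : Tendsto (fun ε => D t - ε * E t) (𝓝[>] 0) (𝓝 (D t - 0 * E t)) :=
    (by fun_prop : Continuous fun ε => D t - ε * E t).continuousAt.mono_left nhdsWithin_le_nhds
  rw [zero_mul, sub_zero] at hlim
  exact le_of_tendsto hlim (eventually_mem_nhdsWithin.mono fun ε hε => hperturbed ε hε t ht)

end DoubledOperator

end MaximumPrinciple

section FundamentalSolution

variable {z : ℝ × ℝ}

theorem pow_four_add_four_mul_sq_pos (hz : z ≠ 0) : 0 < z.1 ^ 4 + 4 * z.2 ^ 2 := by
  rcases eq_or_ne z.1 0 with hx | hx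
  · have hy : z.2 ≠ 0 := fun hy => hz (Prod.ext hx hy)
    positivity
  · positivity

theorem continuous_gNorm : Continuous gNorm :=
  Continuous.rpow_const (by fun_prop) fun _ => Or.inr (by norm_num)

theorem gNorm_zero : gNorm 0 = 0 := by simp [gNorm]

theorem gNorm_pos (hz : z ≠ 0) : 0 < gNorm z :=
  Real.rpow_pos_of_pos (pow_four_add_four_mul_sq_pos hz) _

theorem inv_gNorm_eq_rpow (z : ℝ × ℝ) :
    (gNorm z)⁻¹ = (z.1 ^ 4 + 4 * z.2 ^ 2) ^ (-(1 / 4) : ℝ) :=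
  (Real.rpow_neg (by positivity) _).symm

theorem contDiffAt_inv_gNorm {n : WithTop ℕ∞} (hz : z ≠ 0) :
    ContDiffAt ℝ n (fun w => (gNorm w)⁻¹) z := by
  simp only [inv_gNorm_eq_rpow]
  exact ContDiffAt.rpow_const_of_ne (by fun_prop) (pow_four_add_four_mul_sq_pos hz).ne'

theorem grushinLap_inv_gNorm (hz : z ≠ 0) : grushinLap (fun w => (gNorm w)⁻¹) z = 0 := by
  obtain ⟨x, y⟩ := z
  have hpos : 0 < x ^ 4 + 4 * y ^ 2 := pow_four_add_four_mul_sq_pos hz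
  have hx : deriv (fun t : ℝ => t ^ 4 + 4 * y ^ 2) x = 4 * x ^ 3 := by simp
  have hxx : deriv (deriv fun t : ℝ => t ^ 4 + 4 * y ^ 2) x = 12 * x ^ 2 := by
    rw [deriv_deriv_of_eq_quartic (a := 1) (b := 0) (c := 0) fun s => by ring]
    ring
  have hy : deriv (fun t : ℝ => x ^ 4 + 4 * t ^ 2) y = 8 * y := by simp; ring
  have hyy : deriv (deriv fun t : ℝ => x ^ 4 + 4 * t ^ 2) y = 8 := by
    rw [deriv_deriv_of_eq_quartic (a := 0) (b := 4) (c := 0) fun s => by ring]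
    ring
  have hpow : (x ^ 4 + 4 * y ^ 2) ^ (-(1 / 4) - 1 : ℝ) =
      (x ^ 4 + 4 * y ^ 2) * (x ^ 4 + 4 * y ^ 2) ^ (-(1 / 4) - 2 : ℝ) := by
    rw [← Real.rpow_one_add' hpos.le (by norm_num)]
    norm_num
  simp only [grushinLap, pXX, pYY, inv_gNorm_eq_rpow]
  rw [deriv_deriv_rpow_const (f := fun t => t ^ 4 + 4 * y ^ 2) (by fun_prop) hpos,
    deriv_deriv_rpow_const (f := fun t => x ^ 4 + 4 * t ^ 2) (by fun_prop) hpos,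
    hx, hxx, hy, hyy, hpow]
  ring

theorem tendsto_inv_gNorm_zero : Tendsto (fun w => (gNorm w)⁻¹) (𝓝[≠] 0) atTop := by
  have hlim : Tendsto gNorm (𝓝[≠] 0) (𝓝 0) :=
    (gNorm_zero ▸ continuous_gNorm.tendsto 0).mono_left nhdsWithin_le_nhds
  exact (tendsto_nhdsWithin_iff.2
    ⟨hlim, eventually_mem_nhdsWithin.mono fun _ hw => gNorm_pos hw⟩).inv_tendsto_nhdsGT_zero

theorem isOpen_gBall (c : ℝ × ℝ) (R : ℝ) : IsOpen (gBall c R) :=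
  isOpen_lt (continuous_gNorm.comp (by fun_prop)) continuous_const

theorem mem_gBall_self {c : ℝ × ℝ} {R : ℝ} (hR : 0 < R) : c ∈ gBall c R := by
  simpa [gBall, gNorm_zero] using hR

theorem exists_harmonic_tendsto_atTop {S : Set ℝ} (hS : S.Finite) :
    ∃ g : ℝ × ℝ → ℝ, (∀ z, 0 ≤ g z) ∧
      (∀ z ∉ ({0} : Set ℝ) ×ˢ S, ContDiffAt ℝ 2 g z ∧ grushinLap g z = 0) ∧
      ∀ z ∈ ({0} : Set ℝ) ×ˢ S, Tendsto g (𝓝[(({0} : Set ℝ) ×ˢ S)ᶜ] z) atTop := by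
  induction S, hS using Set.Finite.induction_on with
  | empty => exact ⟨fun _ => 0, by simp, by simp [contDiffAt_const, grushinLap, pXX, pYY], by simp⟩
  | @insert s S _ _ ih =>
    obtain ⟨g, hg0, hg, hpole⟩ := ih
    let τ : ℝ × ℝ → ℝ × ℝ := fun w => (w.1, w.2 + -s)
    have hτ : Continuous τ := by fun_prop
    have hτs : τ (0, s) = 0 := by simp [τ]
    have hτ_ne {w : ℝ × ℝ} (hw : w ≠ (0, s)) : τ w ≠ 0 := fun h => hw <|
      Prod.ext (congrArg Prod.fst h :) (add_neg_eq_zero.1 (congrArg Prod.snd h :))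
    have hΓ0 (w) : 0 ≤ (gNorm (τ w))⁻¹ := inv_nonneg.2 (Real.rpow_nonneg (by positivity) _)
    have hne {w : ℝ × ℝ} (hw : w ∉ ({0} : Set ℝ) ×ˢ insert s S) : w ≠ (0, s) := by
      rintro rfl; exact hw ⟨rfl, mem_insert s S⟩
    have hsub : ({0} ×ˢ insert s S)ᶜ ⊆ (({0} : Set ℝ) ×ˢ S)ᶜ :=
      compl_subset_compl.2 (prod_mono_right (subset_insert s S))
    refine ⟨fun w => g w + (gNorm (τ w))⁻¹, fun w => add_nonneg (hg0 w) (hΓ0 w), fun w hw => ?_, ?_⟩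
    · obtain ⟨hgC, hgL⟩ := hg w (hsub hw)
      have hΓ : ContDiffAt ℝ 2 (fun w => (gNorm (τ w))⁻¹) w := ContDiffAt.comp w (f := τ)
        (contDiffAt_inv_gNorm (hτ_ne (hne hw))) (by fun_prop)
      refine ⟨hgC.add hΓ, ?_⟩
      rw [grushinLap_add hgC hΓ, hgL, grushinLap_comp_add_snd (fun w => (gNorm w)⁻¹),
        grushinLap_inv_gNorm (hτ_ne (hne hw)), add_zero]
    · rintro ⟨x, y⟩ ⟨rfl, rfl | hy⟩
      · have hτ_lim : Tendsto τ (𝓝[({0} ×ˢ insert y S)ᶜ] (0, y)) (𝓝[≠] 0) :=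
          tendsto_nhdsWithin_iff.2 ⟨hτs ▸ hτ.continuousWithinAt,
            eventually_mem_nhdsWithin.mono fun w hw => hτ_ne (hne hw)⟩
        exact tendsto_atTop_mono (fun w => le_add_of_nonneg_left (hg0 w))
          (tendsto_inv_gNorm_zero.comp hτ_lim)
      · exact tendsto_atTop_mono (fun w => le_add_of_nonneg_right (hΓ0 w))
          ((hpole (0, y) ⟨rfl, hy⟩).mono_left (nhdsWithin_mono _ hsub))

end FundamentalSolution

section VerticalLipschitz

/-- The square of half-width `R` about the origin without the points `(0, s)`, `s ∈ S`. -/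
def puncturedSquare (S : Set ℝ) (R : ℝ) : Set (ℝ × ℝ) := ball 0 R \ {0} ×ˢ S

theorem mem_puncturedSquare {S : Set ℝ} {R : ℝ} {z : ℝ × ℝ} :
    z ∈ puncturedSquare S R ↔ (|z.1| < R ∧ |z.2| < R) ∧ ¬(z.1 = 0 ∧ z.2 ∈ S) := by
  simp [puncturedSquare, Prod.norm_def]

theorem puncturedSquare_mono {S : Set ℝ} {R R' : ℝ} (hR : R' ≤ R) :
    puncturedSquare S R' ⊆ puncturedSquare S R :=
  sdiff_subset_sdiff_left (ball_subset_ball hR)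

/-- `v` is Grushin-harmonic and bounded by `M` on the square of half-width `R`, except for finitely
many points `(0, s)`, `s ∈ S`, of the line where the operator degenerates. Allowing several such
points makes the class stable under difference quotients in `y`. -/
structure IsBddHarmonic (S : Set ℝ) (R M : ℝ) (v : ℝ × ℝ → ℝ) : Prop where
  finite_poles : S.Finite
  contDiffAt : ∀ z ∈ puncturedSquare S R, ContDiffAt ℝ 2 v z
  grushinLap_eq_zero : ∀ z ∈ puncturedSquare S R, grushinLap v z = 0
  abs_apply_le : ∀ z ∈ puncturedSquare S R, |v z| ≤ M

theorem IsBddHarmonic.neg {S : Set ℝ} {R M : ℝ} {v : ℝ × ℝ → ℝ} (hv : IsBddHarmonic S R M v) :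
    IsBddHarmonic S R M fun z => -v z where
  finite_poles := hv.finite_poles
  contDiffAt z hz := (hv.contDiffAt z hz).neg
  grushinLap_eq_zero z hz := by
    simpa [hv.grushinLap_eq_zero z hz] using grushinLap_const_mul (-1) v z
  abs_apply_le z hz := (abs_neg (v z)).le.trans (hv.abs_apply_le z hz)

theorem IsBddHarmonic.bound_nonneg {S : Set ℝ} {R M : ℝ} {v : ℝ × ℝ → ℝ}
    (hv : IsBddHarmonic S R M v) (hR : 0 < R) : 0 ≤ M :=
  (abs_nonneg _).trans <| hv.abs_apply_le (R / 2, 0) <| mem_puncturedSquare.2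
    ⟨⟨by rw [abs_of_pos (half_pos hR)]; exact half_lt_self hR, by simpa using hR⟩,
      fun h => (half_pos hR).ne' h.1⟩

/-- A null solution of `doubledGrushinLap` on the wedge `q ≤ p` of the cube of half-width `2 r`. It
is nonnegative there, at least `2` on the faces of the cube, and `O(p₀ - q₀)` at `(x₀, p₀, q₀)`, so
it controls `v (x₀, p₀) - v (x₀, q₀)` for a harmonic `v` with `|v| ≤ 1`. -/
noncomputable def doublingBarrier (r x₀ p₀ q₀ : ℝ) (t : ℝ × ℝ × ℝ) : ℝ :=
  (t.1 ^ 4 - 4 * x₀ ^ 3 * t.1 + 3 * x₀ ^ 4) / r ^ 4 +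
    2 * ((t.2.1 - p₀) ^ 2 + (t.2.2 - q₀) ^ 2) / r ^ 2 +
    (3 / r ^ 4 + 2 / r ^ 2) * ((t.2.1 - t.2.2) * (4 * r - (t.2.1 - t.2.2)))

section Barrier

variable {r x₀ p₀ q₀ : ℝ} {t : ℝ × ℝ × ℝ}

theorem contDiff_doublingBarrier {n : WithTop ℕ∞} : ContDiff ℝ n (doublingBarrier r x₀ p₀ q₀) := by
  unfold doublingBarrier
  fun_prop

theorem doubledGrushinLap_doublingBarrier :
    doubledGrushinLap (doublingBarrier r x₀ p₀ q₀) t = 0 := by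
  simp only [doubledGrushinLap, doublingBarrier]
  rw [deriv_deriv_of_eq_quartic (a := 1 / r ^ 4) (b := 0) (c := -4 * x₀ ^ 3 / r ^ 4)
      fun s => by ring,
    deriv_deriv_of_eq_quartic (a := 0) (b := 2 / r ^ 2 - (3 / r ^ 4 + 2 / r ^ 2))
      (c := -4 * p₀ / r ^ 2 + (3 / r ^ 4 + 2 / r ^ 2) * (4 * r + 2 * t.2.2)) fun s => by ring,
    deriv_deriv_of_eq_quartic (a := 0) (b := 2 / r ^ 2 - (3 / r ^ 4 + 2 / r ^ 2))
      (c := -4 * q₀ / r ^ 2 + (3 / r ^ 4 + 2 / r ^ 2) * (2 * t.2.1 - 4 * r)) fun s => by ring]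
  ring

theorem quartic_tangent_remainder_ge (x x₀ : ℝ) :
    2 / 3 * x ^ 2 * (x - x₀) ^ 2 ≤ x ^ 4 - 4 * x₀ ^ 3 * x + 3 * x₀ ^ 4 := by
  linear_combination 3 * mul_nonneg (sq_nonneg (x - x₀)) (sq_nonneg (x₀ + x / 3))

theorem sq_le_sq_sub_of_abs {r a a₀ : ℝ} (ha₀ : |a₀| ≤ r) (ha : |a| = 2 * r) :
    r ^ 2 ≤ (a - a₀) ^ 2 := by
  rw [← sq_abs (a - a₀)]
  have hr : 0 ≤ r := (abs_nonneg a₀).trans ha₀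
  gcongr
  linarith [abs_sub_abs_le_abs_sub a a₀]

theorem doublingBarrier_offDiag_nonneg (ht : ‖t‖ ≤ 2 * r) (hqp : t.2.2 ≤ t.2.1) :
    0 ≤ (t.2.1 - t.2.2) * (4 * r - (t.2.1 - t.2.2)) := by
  have hp : |t.2.1| ≤ 2 * r := ((norm_fst_le t.2).trans (norm_snd_le t)).trans ht
  have hq : |t.2.2| ≤ 2 * r := ((norm_snd_le t.2).trans (norm_snd_le t)).trans ht
  exact mul_nonneg (sub_nonneg.2 hqp) (by linarith [(abs_le.1 hp).2, (abs_le.1 hq).1])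

theorem doublingBarrier_nonneg (ht : ‖t‖ ≤ 2 * r) (hqp : t.2.2 ≤ t.2.1) :
    0 ≤ doublingBarrier r x₀ p₀ q₀ t := by
  have hquartic : 0 ≤ t.1 ^ 4 - 4 * x₀ ^ 3 * t.1 + 3 * x₀ ^ 4 :=
    le_trans (by positivity) (quartic_tangent_remainder_ge t.1 x₀)
  have hdiag := doublingBarrier_offDiag_nonneg ht hqp
  unfold doublingBarrier
  positivity

theorem two_le_doublingBarrier (hr : 0 < r) (h₀ : ‖(x₀, p₀, q₀)‖ ≤ r) (ht : ‖t‖ = 2 * r)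
    (hqp : t.2.2 ≤ t.2.1) : 2 ≤ doublingBarrier r x₀ p₀ q₀ t := by
  have hquartic := quartic_tangent_remainder_ge t.1 x₀
  have hx_nonneg : 0 ≤ (t.1 ^ 4 - 4 * x₀ ^ 3 * t.1 + 3 * x₀ ^ 4) / r ^ 4 :=
    div_nonneg (le_trans (by positivity) hquartic) (by positivity)
  have hpq_nonneg : 0 ≤ 2 * ((t.2.1 - p₀) ^ 2 + (t.2.2 - q₀) ^ 2) / r ^ 2 := by positivity
  have hdiag : 0 ≤ (3 / r ^ 4 + 2 / r ^ 2) * ((t.2.1 - t.2.2) * (4 * r - (t.2.1 - t.2.2))) :=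
    mul_nonneg (by positivity) (doublingBarrier_offDiag_nonneg ht.le hqp)
  suffices h : 2 ≤ (t.1 ^ 4 - 4 * x₀ ^ 3 * t.1 + 3 * x₀ ^ 4) / r ^ 4 ∨
      2 ≤ 2 * ((t.2.1 - p₀) ^ 2 + (t.2.2 - q₀) ^ 2) / r ^ 2 by
    unfold doublingBarrier
    rcases h with h | h <;> linarith
  rw [le_div_iff₀ (by positivity), le_div_iff₀ (by positivity)]
  simp only [Prod.norm_def, Real.norm_eq_abs, max_le_iff] at h₀
  simp only [Prod.norm_def, Real.norm_eq_abs] at ht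
  have hface : |t.1| = 2 * r ∨ |t.2.1| = 2 * r ∨ |t.2.2| = 2 * r := by
    rcases max_choice |t.1| (max |t.2.1| |t.2.2|) with h | h
    · exact Or.inl (h ▸ ht)
    · rcases max_choice |t.2.1| |t.2.2| with h' | h'
      · exact Or.inr (Or.inl (by rw [← ht, h, h']))
      · exact Or.inr (Or.inr (by rw [← ht, h, h']))
  rcases hface with hx | hp | hq
  · have hsq : t.1 ^ 2 = 4 * r ^ 2 := by rw [← sq_abs, hx]; ring
    rw [hsq] at hquartic
    left
    nlinarith [mul_le_mul_of_nonneg_left (sq_le_sq_sub_of_abs h₀.1 hx) (sq_nonneg r)]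
  · right
    linarith [sq_le_sq_sub_of_abs h₀.2.1 hp, sq_nonneg (t.2.2 - q₀)]
  · right
    linarith [sq_le_sq_sub_of_abs h₀.2.2 hq, sq_nonneg (t.2.1 - p₀)]

theorem doublingBarrier_base_le :
    doublingBarrier r x₀ p₀ q₀ (x₀, p₀, q₀) ≤ (3 / r ^ 4 + 2 / r ^ 2) * (4 * r) * (p₀ - q₀) := by
  have h : 0 ≤ (3 / r ^ 4 + 2 / r ^ 2) * (p₀ - q₀) ^ 2 := by positivity
  unfold doublingBarrier
  calc _ = (3 / r ^ 4 + 2 / r ^ 2) * (4 * r) * (p₀ - q₀) -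
        (3 / r ^ 4 + 2 / r ^ 2) * (p₀ - q₀) ^ 2 := by ring
    _ ≤ _ := sub_le_self _ h

end Barrier

section Comparison

variable {S : Set ℝ}

/-- The points `(x, p, q)` for which `(x, p)` or `(x, q)` is one of the points `(0, s)`, `s ∈ S`. -/
def doubledPoles (S : Set ℝ) : Set (ℝ × ℝ × ℝ) :=
  {t | (t.1, t.2.1) ∈ ({0} : Set ℝ) ×ˢ S ∨ (t.1, t.2.2) ∈ ({0} : Set ℝ) ×ˢ S}

theorem isClosed_doubledPoles (hS : S.Finite) : IsClosed (doubledPoles S) :=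
  have hP : IsClosed (({0} : Set ℝ) ×ˢ S) := isClosed_singleton.prod hS.isClosed
  (hP.preimage (by fun_prop : Continuous fun t : ℝ × ℝ × ℝ => (t.1, t.2.1))).union
    (hP.preimage (by fun_prop : Continuous fun t : ℝ × ℝ × ℝ => (t.1, t.2.2)))

theorem exists_doubled_superharmonic_tendsto_atTop (hS : S.Finite) (ρ : ℝ) :
    ∃ E : ℝ × ℝ × ℝ → ℝ, (∀ t, ‖t‖ ≤ ρ → 0 ≤ E t) ∧
      (∀ t ∉ doubledPoles S, ContDiffAt ℝ 2 E t ∧ doubledGrushinLap E t < 0) ∧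
      ∀ t ∈ doubledPoles S, Tendsto E (𝓝[(doubledPoles S)ᶜ] t) atTop := by
  obtain ⟨g, hg0, hg, hpole⟩ := exists_harmonic_tendsto_atTop hS
  let h : ℝ × ℝ × ℝ → ℝ := fun t => ρ ^ 2 - t.1 ^ 2
  have hh : ContDiff ℝ 2 h := by fun_prop
  have hh_lap (t) : doubledGrushinLap h t = -2 := by
    simp only [doubledGrushinLap, h, deriv_const', deriv_const]
    rw [deriv_deriv_of_eq_quartic (a := 0) (b := -1) (c := 0) fun s => by ring]
    ring
  refine ⟨fun t => g (t.1, t.2.1) + g (t.1, t.2.2) + h t, fun t ht => ?_, fun t ht => ?_,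
    fun t ht => ?_⟩
  · have : t.1 ^ 2 ≤ ρ ^ 2 := sq_le_sq.2 (((norm_fst_le t).trans ht).trans (le_abs_self ρ))
    exact add_nonneg (add_nonneg (hg0 _) (hg0 _)) (sub_nonneg.2 this)
  · obtain ⟨hp, hp_lap⟩ := hg _ fun h => ht (Or.inl h)
    obtain ⟨hq, hq_lap⟩ := hg _ fun h => ht (Or.inr h)
    have hgp : ContDiffAt ℝ 2 (fun s : ℝ × ℝ × ℝ => g (s.1, s.2.1)) t :=
      ContDiffAt.comp t (f := fun s => (s.1, s.2.1)) hp (by fun_prop)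
    have hgq : ContDiffAt ℝ 2 (fun s : ℝ × ℝ × ℝ => g (s.1, s.2.2)) t :=
      ContDiffAt.comp t (f := fun s => (s.1, s.2.2)) hq (by fun_prop)
    refine ⟨(hgp.add hgq).add hh.contDiffAt, ?_⟩
    rw [doubledGrushinLap_add (hgp.add hgq) hh.contDiffAt, doubledGrushinLap_add hgp hgq,
      doubledGrushinLap_comp_fst, doubledGrushinLap_comp_snd, hp_lap, hq_lap, hh_lap]
    norm_num
  · have hpoles : Tendsto (fun s : ℝ × ℝ × ℝ => g (s.1, s.2.1) + g (s.1, s.2.2))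
        (𝓝[(doubledPoles S)ᶜ] t) atTop := by
      rcases ht with ht | ht
      · refine tendsto_atTop_mono (fun s => le_add_of_nonneg_right (hg0 (s.1, s.2.2)))
          ((hpole _ ht).comp (tendsto_nhdsWithin_iff.2 ⟨?_, ?_⟩))
        · exact (by fun_prop : Continuous fun s : ℝ × ℝ × ℝ => (s.1, s.2.1)).continuousWithinAt
        · exact eventually_mem_nhdsWithin.mono fun s hs hs' => hs (Or.inl hs')
      · refine tendsto_atTop_mono (fun s => le_add_of_nonneg_left (hg0 (s.1, s.2.1)))
          ((hpole _ ht).comp (tendsto_nhdsWithin_iff.2 ⟨?_, ?_⟩))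
        · exact (by fun_prop : Continuous fun s : ℝ × ℝ × ℝ => (s.1, s.2.2)).continuousWithinAt
        · exact eventually_mem_nhdsWithin.mono fun s hs hs' => hs (Or.inr hs')
    exact hpoles.atTop_add hh.continuous.continuousWithinAt

variable {M : ℝ} {v : ℝ × ℝ → ℝ}

/-- The difference `v (x, p) - v (x, q)`, to which the doubling of variables is applied. -/
def doubledDiff (v : ℝ × ℝ → ℝ) (t : ℝ × ℝ × ℝ) : ℝ := v (t.1, t.2.1) - v (t.1, t.2.2)

theorem IsBddHarmonic.doubledDiff_spec {R : ℝ} (hv : IsBddHarmonic S R M v) {t : ℝ × ℝ × ℝ}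
    (ht : ‖t‖ < R) (htS : t ∉ doubledPoles S) : ContDiffAt ℝ 2 (doubledDiff v) t ∧
      doubledGrushinLap (doubledDiff v) t = 0 ∧ |doubledDiff v t| ≤ 2 * M := by
  have hnorm : (‖t.1‖ < R ∧ ‖t.2.1‖ < R) ∧ ‖t.2.2‖ < R := by
    simpa [Prod.norm_def, and_assoc] using ht
  have hp : (t.1, t.2.1) ∈ puncturedSquare S R :=
    ⟨by simpa [Prod.norm_def] using hnorm.1, fun h => htS (Or.inl h)⟩
  have hq : (t.1, t.2.2) ∈ puncturedSquare S R :=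
    ⟨by simpa [Prod.norm_def] using ⟨hnorm.1.1, hnorm.2⟩, fun h => htS (Or.inr h)⟩
  have hvp : ContDiffAt ℝ 2 (fun s : ℝ × ℝ × ℝ => v (s.1, s.2.1)) t :=
    ContDiffAt.comp t (f := fun s => (s.1, s.2.1)) (hv.contDiffAt (t.1, t.2.1) hp) (by fun_prop)
  have hvq : ContDiffAt ℝ 2 (fun s : ℝ × ℝ × ℝ => v (s.1, s.2.2)) t :=
    ContDiffAt.comp t (f := fun s => (s.1, s.2.2)) (hv.contDiffAt (t.1, t.2.2) hq) (by fun_prop)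
  refine ⟨hvp.sub hvq, (doubledGrushinLap_sub hvp hvq).trans ?_, ?_⟩
  · rw [doubledGrushinLap_comp_fst, doubledGrushinLap_comp_snd, hv.grushinLap_eq_zero _ hp,
      hv.grushinLap_eq_zero _ hq, sub_zero]
  · exact (abs_sub _ _).trans (by linarith [hv.abs_apply_le _ hp, hv.abs_apply_le _ hq])

theorem IsBddHarmonic.doubledDiff_le {r x₀ p₀ q₀ : ℝ} (hr : 0 < r)
    (hv : IsBddHarmonic S (3 * r) M v) (h₀ : ‖(x₀, p₀, q₀)‖ < r)
    (h₀S : (x₀, p₀, q₀) ∉ doubledPoles S) (hqp : q₀ ≤ p₀) :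
    doubledDiff v (x₀, p₀, q₀) ≤ M * doublingBarrier r x₀ p₀ q₀ (x₀, p₀, q₀) := by
  obtain ⟨E, hE0, hE, hEpole⟩ :=
    exists_doubled_superharmonic_tendsto_atTop hv.finite_poles (2 * r)
  let K : Set (ℝ × ℝ × ℝ) := closedBall 0 (2 * r) ∩ {t | t.2.2 ≤ t.2.1}
  let U : Set (ℝ × ℝ × ℝ) := ball 0 (2 * r) ∩ {t | t.2.2 < t.2.1}
  let B := doublingBarrier r x₀ p₀ q₀
  have hUK : U ⊆ K := inter_subset_inter ball_subset_closedBall fun t (ht : t.2.2 < t.2.1) => ht.le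
  have hB (t) : ContDiffAt ℝ 2 (fun s => M * B s) t :=
    contDiffAt_const.mul contDiff_doublingBarrier.contDiffAt
  have hnorm {t} (ht : t ∈ K) : ‖t‖ ≤ 2 * r := mem_closedBall_zero_iff.1 ht.1
  have hV {t} (ht : t ∈ K \ doubledPoles S) :=
    hv.doubledDiff_spec ((hnorm ht.1).trans_lt (by linarith)) ht.2
  have hK₀ : (x₀, p₀, q₀) ∈ K \ doubledPoles S :=
    ⟨⟨mem_closedBall_zero_iff.2 (by linarith), hqp⟩, h₀S⟩
  have hM : 0 ≤ M := hv.bound_nonneg (by positivity)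
  have hB0 {t} (ht : t ∈ K) : 0 ≤ M * B t := mul_nonneg hM (doublingBarrier_nonneg (hnorm ht) ht.2)
  have hbdry : ∀ t ∈ K \ (U ∪ doubledPoles S), doubledDiff v t - M * B t ≤ 0 := by
    rintro t ⟨htK, htU⟩
    rcases (show t.2.2 ≤ t.2.1 from htK.2).eq_or_lt with hdiag | hlt
    · simpa [doubledDiff, hdiag] using hB0 htK
    · have hface : ‖t‖ = 2 * r := (hnorm htK).antisymm <| not_lt.1 fun hlt' =>
        htU (Or.inl ⟨mem_ball_zero_iff.2 hlt', hlt⟩)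
      have hVt := (hV ⟨htK, fun h => htU (Or.inr h)⟩).2.2
      linarith [(abs_le.1 hVt).2,
        mul_le_mul_of_nonneg_left (two_le_doublingBarrier hr h₀.le hface htK.2) hM]
  refine sub_nonpos.1 (nonpos_of_doubledGrushinLap_nonneg (K := K) (U := U) (m := 2 * M)
    ((isCompact_closedBall 0 (2 * r)).inter_right (isClosed_le (by fun_prop) (by fun_prop)))
    (isOpen_ball.inter (isOpen_lt (by fun_prop) (by fun_prop))) hUK
    (isClosed_doubledPoles hv.finite_poles) (fun t ht => (hV ht).1.sub (hB t))
    (fun t ht => (hE t ht.2).1) (fun t ht => ?_) (fun t ht => (hE t ht.2).2) hbdry (fun t ht => ?_)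
    (fun t ht => hE0 t (hnorm ht.1))
    (fun t ht => (hEpole t ht.2).mono_left (nhdsWithin_mono _ (sdiff_subset_compl _ _))) _ hK₀)
  · obtain ⟨hVt, hVlap, -⟩ := hV ⟨hUK ht.1, ht.2⟩
    rw [doubledGrushinLap_sub hVt (hB t), hVlap, doubledGrushinLap_const_mul,
      doubledGrushinLap_doublingBarrier, mul_zero, sub_zero]
  · linarith [(abs_le.1 (hV ht).2.2).2, hB0 ht.1]

theorem exists_vertical_lipschitz {R : ℝ} (hR : 0 < R) : ∃ ρ > 0, ∃ C, ∀ S M v,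
    IsBddHarmonic S R M v → ∀ x p q, (x, p) ∈ puncturedSquare S ρ → (x, q) ∈ puncturedSquare S ρ →
      |v (x, p) - v (x, q)| ≤ C * M * |p - q| := by
  obtain ⟨r, hr, rfl⟩ : ∃ r > 0, 3 * r = R := ⟨R / 3, by positivity, by ring⟩
  refine ⟨r, hr, (3 / r ^ 4 + 2 / r ^ 2) * (4 * r), fun S M v hv => ?_⟩
  have hone {w} (hw : IsBddHarmonic S (3 * r) M w) {x p q} (hqp : q ≤ p)
      (hp : (x, p) ∈ puncturedSquare S r) (hq : (x, q) ∈ puncturedSquare S r) :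
      w (x, p) - w (x, q) ≤ (3 / r ^ 4 + 2 / r ^ 2) * (4 * r) * M * (p - q) := by
    have hM : 0 ≤ M := hw.bound_nonneg (by positivity)
    have h₀ : ‖(x, p, q)‖ < r := by
      rw [mem_puncturedSquare] at hp hq
      simpa [Prod.norm_def] using ⟨hp.1.1, hp.1.2, hq.1.2⟩
    calc w (x, p) - w (x, q) ≤ M * doublingBarrier r x p q (x, p, q) :=
          hw.doubledDiff_le hr h₀ (fun h => h.elim hp.2 hq.2) hqp
      _ ≤ M * ((3 / r ^ 4 + 2 / r ^ 2) * (4 * r) * (p - q)) :=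
          mul_le_mul_of_nonneg_left doublingBarrier_base_le hM
      _ = _ := by ring
  have habs {x p q} (hqp : q ≤ p) (hp : (x, p) ∈ puncturedSquare S r)
      (hq : (x, q) ∈ puncturedSquare S r) :
      |v (x, p) - v (x, q)| ≤ (3 / r ^ 4 + 2 / r ^ 2) * (4 * r) * M * |p - q| := by
    rw [abs_of_nonneg (sub_nonneg.2 hqp)]
    exact abs_sub_le_iff.2 ⟨hone hv hqp hp hq, by linarith [hone hv.neg hqp hp hq]⟩
  intro x p q hp hq
  rcases le_total q p with hqp | hpq
  · exact habs hqp hp hq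
  · rw [abs_sub_comm (v _), abs_sub_comm p]
    exact habs hpq hq hp

end Comparison

end VerticalLipschitz

section DifferenceQuotients

/-- The difference quotient of `v` in the direction `y` with increment `h` (`0` for `h = 0`). -/
noncomputable def yDiffQuot (h : ℝ) (v : ℝ × ℝ → ℝ) (z : ℝ × ℝ) : ℝ :=
  h⁻¹ * (v (z.1, z.2 + h) - v z)

variable {S : Set ℝ} {v : ℝ × ℝ → ℝ} {z : ℝ × ℝ} {h : ℝ}

theorem contDiffAt_comp_add_snd {n : WithTop ℕ∞} (hv : ContDiffAt ℝ n v (z.1, z.2 + h)) :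
    ContDiffAt ℝ n (fun w => v (w.1, w.2 + h)) z :=
  ContDiffAt.comp z (f := fun w => (w.1, w.2 + h)) hv (by fun_prop)

theorem grushinLap_yDiffQuot (hv : ContDiffAt ℝ 2 v z) (hv' : ContDiffAt ℝ 2 v (z.1, z.2 + h)) :
    grushinLap (yDiffQuot h v) z = yDiffQuot h (grushinLap v) z := by
  rw [yDiffQuot, ← grushinLap_comp_add_snd, ← grushinLap_sub (contDiffAt_comp_add_snd hv') hv,
    ← grushinLap_const_mul]
  rfl

theorem tendsto_yDiffQuot (hv : DifferentiableAt ℝ v z) :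
    Tendsto (fun h => yDiffQuot h v z) (𝓝[≠] 0) (𝓝 (pY v z)) :=
  hasDerivAt_iff_tendsto_slope_zero.1 (hasDerivAt_pY hv)

theorem exists_isBddHarmonic_yDiffQuot {R : ℝ} (hR : 0 < R) : ∃ ρ > 0, ∃ C, ∀ S M v,
    IsBddHarmonic S R M v → ∀ h, h ≠ 0 → |h| < ρ →
      IsBddHarmonic (S ∪ (· + h) ⁻¹' S) ρ (C * M) (yDiffQuot h v) := by
  obtain ⟨ρ, hρ, C, hlip⟩ := exists_vertical_lipschitz hR
  refine ⟨min ρ R / 2, by positivity, C, fun S M v hv h h0 hh => ?_⟩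
  have hmem {z} (hz : z ∈ puncturedSquare (S ∪ (· + h) ⁻¹' S) (min ρ R / 2)) :
      z ∈ puncturedSquare S (min ρ R) ∧ (z.1, z.2 + h) ∈ puncturedSquare S (min ρ R) := by
    obtain ⟨⟨hz₁, hz₂⟩, hzS⟩ := mem_puncturedSquare.1 hz
    simp only [mem_puncturedSquare]
    have hmin : 0 < min ρ R := lt_min hρ hR
    have hsum : |z.2 + h| ≤ |z.2| + |h| := abs_add_le _ _
    exact ⟨⟨by constructor <;> linarith, fun h => hzS ⟨h.1, Or.inl h.2⟩⟩,
      by constructor <;> linarith, fun h => hzS ⟨h.1, Or.inr h.2⟩⟩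
  have hsubR : puncturedSquare S (min ρ R) ⊆ puncturedSquare S R :=
    puncturedSquare_mono (min_le_right _ _)
  have hsubρ : puncturedSquare S (min ρ R) ⊆ puncturedSquare S ρ :=
    puncturedSquare_mono (min_le_left _ _)
  refine ⟨hv.finite_poles.union (hv.finite_poles.preimage (add_left_injective h).injOn),
    fun z hz => ?_, fun z hz => ?_, fun z hz => ?_⟩ <;> obtain ⟨hz, hz'⟩ := hmem hz
  · exact contDiffAt_const.mul ((contDiffAt_comp_add_snd (hv.contDiffAt _ (hsubR hz'))).sub
      (hv.contDiffAt _ (hsubR hz)))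
  · rw [grushinLap_yDiffQuot (hv.contDiffAt _ (hsubR hz)) (hv.contDiffAt _ (hsubR hz')), yDiffQuot,
      hv.grushinLap_eq_zero _ (hsubR hz), hv.grushinLap_eq_zero _ (hsubR hz'), sub_zero, mul_zero]
  · have hle := hlip S M v hv z.1 (z.2 + h) z.2 (hsubρ hz') (hsubρ hz)
    rw [add_sub_cancel_left] at hle
    rw [yDiffQuot, abs_mul, abs_inv, inv_mul_le_iff₀ (abs_pos.2 h0)]
    linarith

theorem eventually_notMem_shifted_poles (hS : S.Finite) {y : ℝ} (hy : y ∉ S) :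
    ∀ᶠ h in 𝓝[≠] (0 : ℝ), y ∉ S ∪ (· + h) ⁻¹' S := by
  have hlim : Tendsto (fun h => y + h) (𝓝[≠] 0) (𝓝 y) :=
    ((continuous_const_add y).tendsto' 0 y (add_zero y)).mono_left nhdsWithin_le_nhds
  filter_upwards [hlim.eventually (hS.isClosed.isOpen_compl.mem_nhds hy)] with h hh
  exact fun hmem => hmem.elim hy hh

end DifferenceQuotients

section InteriorEstimates

/-- A priori bound at points near the origin for `T v` in terms of the supremum of `v` only: the
constant and the neighbourhood depend neither on `v` nor on its poles. Points at the height of a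
pole are left out so that the horizontal line through the point avoids all poles. -/
def InteriorBound (T : (ℝ × ℝ → ℝ) → ℝ × ℝ → ℝ) : Prop :=
  ∀ R > 0, ∃ C, ∀ᶠ z in 𝓝 (0 : ℝ × ℝ), ∀ S M v, IsBddHarmonic S R M v → z.2 ∉ S → |T v z| ≤ C * M

/-- A priori Lipschitz estimate for `T v` near the origin, with the uniformity of
`InteriorBound`. -/
def InteriorLipschitz (T : (ℝ × ℝ → ℝ) → ℝ × ℝ → ℝ) : Prop :=
  ∀ R > 0, ∃ C, ∀ᶠ w in 𝓝 (0 : (ℝ × ℝ) × ℝ × ℝ), ∀ S M v, IsBddHarmonic S R M v →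
    w.1.2 ∉ S → w.2.2 ∉ S → |T v w.1 - T v w.2| ≤ C * M * dist w.1 w.2

/-- The properties of a differential operator `T` of order at most one, with coefficients
independent of `y`, that are needed to pass estimates from `T v` to `∂_y T v`. -/
structure IsFirstOrder (T : (ℝ × ℝ → ℝ) → ℝ × ℝ → ℝ) : Prop where
  differentiableAt : ∀ {v z}, ContDiffAt ℝ 2 v z → DifferentiableAt ℝ (T v) z
  apply_yDiffQuot : ∀ {v z h}, ContDiffAt ℝ 2 v z → ContDiffAt ℝ 2 v (z.1, z.2 + h) →
    T (yDiffQuot h v) z = yDiffQuot h (T v) z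

theorem isFirstOrder_id : IsFirstOrder id where
  differentiableAt hv := hv.differentiableAt two_ne_zero
  apply_yDiffQuot _ _ := rfl

theorem isFirstOrder_pX : IsFirstOrder pX where
  differentiableAt {v z} hv :=
    (contDiffAt_pX (n := 1) (by simpa [one_add_one_eq_two] using hv)).differentiableAt one_ne_zero
  apply_yDiffQuot {v z h} hv hv' := by
    have hz := hasDerivAt_pX (hv.differentiableAt two_ne_zero)
    have hz' := hasDerivAt_pX (hv'.differentiableAt two_ne_zero)
    exact ((hz'.sub hz).const_mul h⁻¹).deriv

theorem isFirstOrder_pY : IsFirstOrder pY where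
  differentiableAt {v z} hv :=
    (contDiffAt_pY (n := 1) (by simpa [one_add_one_eq_two] using hv)).differentiableAt one_ne_zero
  apply_yDiffQuot {v z h} hv hv' := by
    have hz := hasDerivAt_pY (hv.differentiableAt two_ne_zero)
    have hz' := (hasDerivAt_pY (hv'.differentiableAt two_ne_zero)).comp_add_const z.2 h
    exact ((hz'.sub hz).const_mul h⁻¹).deriv

variable {T : (ℝ × ℝ → ℝ) → ℝ × ℝ → ℝ}

theorem IsBddHarmonic.contDiffAt_of_notMem {S : Set ℝ} {R M : ℝ} {v : ℝ × ℝ → ℝ} {z : ℝ × ℝ}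
    (hv : IsBddHarmonic S R M v) (hz : z ∈ ball 0 R) (hzS : z.2 ∉ S) : ContDiffAt ℝ 2 v z :=
  hv.contDiffAt z ⟨hz, fun h => hzS h.2⟩

theorem IsFirstOrder.tendsto_apply_yDiffQuot (hT : IsFirstOrder T) {v : ℝ × ℝ → ℝ} {z : ℝ × ℝ}
    (hv : ContDiffAt ℝ 2 v z) :
    Tendsto (fun h => T (yDiffQuot h v) z) (𝓝[≠] 0) (𝓝 (pY (T v) z)) := by
  have hshift : Tendsto (fun h => (z.1, z.2 + h)) (𝓝[≠] 0) (𝓝 z) :=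
    ((by fun_prop : Continuous fun h => (z.1, z.2 + h)).tendsto' 0 z (by simp)).mono_left
      nhdsWithin_le_nhds
  refine (tendsto_yDiffQuot (hT.differentiableAt hv)).congr' ?_
  filter_upwards [hshift.eventually (hv.eventually (by simp))] with h hv'
  exact (hT.apply_yDiffQuot hv hv').symm

theorem InteriorBound.comp_pY (hb : InteriorBound T) (hT : IsFirstOrder T) :
    InteriorBound fun v => pY (T v) := by
  intro R hR
  obtain ⟨ρ, hρ, C₁, hquot⟩ := exists_isBddHarmonic_yDiffQuot hR
  obtain ⟨C₂, hC₂⟩ := hb ρ hρ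
  refine ⟨C₂ * C₁, ?_⟩
  filter_upwards [hC₂, ball_mem_nhds 0 hR] with z hz hzR S M v hv hzS
  refine le_of_tendsto
    (hT.tendsto_apply_yDiffQuot (hv.contDiffAt_of_notMem hzR hzS)).abs ?_
  have hsmall : ∀ᶠ h in 𝓝[≠] (0 : ℝ), |h| < ρ :=
    nhdsWithin_le_nhds ((continuous_abs.tendsto' 0 0 abs_zero).eventually_lt_const hρ)
  filter_upwards [eventually_mem_nhdsWithin, hsmall,
    eventually_notMem_shifted_poles hv.finite_poles hzS] with h h0 hh hzh
  rw [mul_assoc]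
  exact hz _ _ _ (hquot S M v hv h h0 hh) hzh

theorem InteriorLipschitz.comp_pY (hl : InteriorLipschitz T) (hT : IsFirstOrder T) :
    InteriorLipschitz fun v => pY (T v) := by
  intro R hR
  obtain ⟨ρ, hρ, C₁, hquot⟩ := exists_isBddHarmonic_yDiffQuot hR
  obtain ⟨C₂, hC₂⟩ := hl ρ hρ
  refine ⟨C₂ * C₁, ?_⟩
  filter_upwards [hC₂, prod_mem_nhds (ball_mem_nhds 0 hR) (ball_mem_nhds 0 hR)]
    with w hw hwR S M v hv hw₁ hw₂
  have hlim := (hT.tendsto_apply_yDiffQuot (hv.contDiffAt_of_notMem hwR.1 hw₁)).sub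
    (hT.tendsto_apply_yDiffQuot (hv.contDiffAt_of_notMem hwR.2 hw₂))
  refine le_of_tendsto hlim.abs ?_
  have hsmall : ∀ᶠ h in 𝓝[≠] (0 : ℝ), |h| < ρ :=
    nhdsWithin_le_nhds ((continuous_abs.tendsto' 0 0 abs_zero).eventually_lt_const hρ)
  filter_upwards [eventually_mem_nhdsWithin, hsmall,
    eventually_notMem_shifted_poles hv.finite_poles hw₁,
    eventually_notMem_shifted_poles hv.finite_poles hw₂] with h h0 hh hwh₁ hwh₂
  rw [mul_assoc C₂]
  exact hw _ _ _ (hquot S M v hv h h0 hh) hwh₁ hwh₂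

end InteriorEstimates

section InteriorEstimatesOfOperators

theorem InteriorBound.vertical {T : (ℝ × ℝ → ℝ) → ℝ × ℝ → ℝ} (hb : InteriorBound T)
    (hT : IsFirstOrder T) {R : ℝ} (hR : 0 < R) : ∃ C, ∀ᶠ t in 𝓝 (0 : ℝ × ℝ × ℝ), ∀ S M v,
      IsBddHarmonic S R M v → t.2.1 ∉ S → t.2.2 ∉ S →
        |T v (t.1, t.2.1) - T v (t.1, t.2.2)| ≤ C * M * |t.2.1 - t.2.2| := by
  obtain ⟨ρ, hρ, C₁, hquot⟩ := exists_isBddHarmonic_yDiffQuot hR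
  obtain ⟨C₂, hC₂⟩ := hb ρ hρ
  have hq : Tendsto (fun t : ℝ × ℝ × ℝ => (t.1, t.2.2)) (𝓝 0) (𝓝 0) :=
    (by fun_prop : Continuous _).tendsto' _ _ rfl
  have hp : Tendsto (fun t : ℝ × ℝ × ℝ => (t.1, t.2.1)) (𝓝 0) (𝓝 0) :=
    (by fun_prop : Continuous _).tendsto' _ _ rfl
  have hh : Tendsto (fun t : ℝ × ℝ × ℝ => |t.2.1 - t.2.2|) (𝓝 0) (𝓝 0) :=
    (by fun_prop : Continuous _).tendsto' _ _ (by simp)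
  refine ⟨C₂ * C₁, ?_⟩
  filter_upwards [hq.eventually hC₂, hq.eventually (ball_mem_nhds 0 hR),
    hp.eventually (ball_mem_nhds 0 hR), hh.eventually_lt_const hρ]
    with ⟨x, p, q⟩ hbound hqR hpR hpq S M v hv hpS hqS
  rcases eq_or_ne p q with rfl | hne
  · simp
  have hsub : p - q ≠ 0 := sub_ne_zero.2 hne
  have hshift : q + (p - q) = p := add_sub_cancel q p
  have hle := hbound _ _ _ (hquot S M v hv (p - q) hsub hpq) (by simp [hqS, hpS])
  rw [hT.apply_yDiffQuot (hv.contDiffAt_of_notMem hqR hqS)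
    (by simpa only [hshift] using hv.contDiffAt_of_notMem hpR hpS), yDiffQuot, hshift, abs_mul,
    abs_inv, inv_mul_le_iff₀ (abs_pos.2 hsub)] at hle
  linarith

theorem InteriorBound.horizontal {T : (ℝ × ℝ → ℝ) → ℝ × ℝ → ℝ}
    (hb : InteriorBound fun v => pX (T v)) (hT : IsFirstOrder T) {R : ℝ} (hR : 0 < R) :
    ∃ C, ∀ᶠ t in 𝓝 (0 : (ℝ × ℝ) × ℝ), ∀ S M v, IsBddHarmonic S R M v → t.2 ∉ S →
      |T v (t.1.1, t.2) - T v (t.1.2, t.2)| ≤ C * M * |t.1.1 - t.1.2| := by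
  obtain ⟨C, hC⟩ := hb R hR
  obtain ⟨δ, hδ, hball⟩ := Metric.eventually_nhds_iff_ball.1 (hC.and (ball_mem_nhds 0 hR))
  refine ⟨C, ?_⟩
  filter_upwards [ball_mem_nhds 0 hδ] with ⟨⟨x, x'⟩, y⟩ ht S M v hv hy
  obtain ⟨⟨hx, hx'⟩, hyδ⟩ : (x ∈ ball 0 δ ∧ x' ∈ ball 0 δ) ∧ y ∈ ball 0 δ := by
    simpa [Prod.norm_def] using ht
  have hmem {s : ℝ} (hs : s ∈ ball 0 δ) : (s, y) ∈ ball (0 : ℝ × ℝ) δ := by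
    simpa [Prod.norm_def] using And.intro hs hyδ
  exact (convex_ball (0 : ℝ) δ).norm_image_sub_le_of_norm_hasDerivWithin_le
    (f := fun s => T v (s, y)) (f' := fun s => pX (T v) (s, y))
    (fun s hs => (hasDerivAt_pX (hT.differentiableAt
      (hv.contDiffAt_of_notMem (hball _ (hmem hs)).2 hy))).hasDerivWithinAt)
    (fun s hs => (hball _ (hmem hs)).1 S M v hv hy) hx' hx

theorem InteriorBound.interiorLipschitz {T : (ℝ × ℝ → ℝ) → ℝ × ℝ → ℝ} (hb : InteriorBound T)
    (hbX : InteriorBound fun v => pX (T v)) (hT : IsFirstOrder T) : InteriorLipschitz T := by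
  intro R hR
  obtain ⟨C₁, hver⟩ := hb.vertical hT hR
  obtain ⟨C₂, hhor⟩ := InteriorBound.horizontal hbX hT hR
  have hlim₁ : Tendsto (fun w : (ℝ × ℝ) × ℝ × ℝ => (w.1.1, w.1.2, w.2.2)) (𝓝 0) (𝓝 0) :=
    (by fun_prop : Continuous _).tendsto' _ _ rfl
  have hlim₂ : Tendsto (fun w : (ℝ × ℝ) × ℝ × ℝ => ((w.1.1, w.2.1), w.2.2)) (𝓝 0) (𝓝 0) :=
    (by fun_prop : Continuous _).tendsto' _ _ rfl
  refine ⟨|C₁| + |C₂|, ?_⟩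
  filter_upwards [hlim₁.eventually hver, hlim₂.eventually hhor]
    with ⟨⟨x, p⟩, x', q⟩ hv₁ hv₂ S M v hv hp hq
  have hM : 0 ≤ M := hv.bound_nonneg hR
  calc |T v (x, p) - T v (x', q)|
      ≤ |T v (x, p) - T v (x, q)| + |T v (x, q) - T v (x', q)| := abs_sub_le _ _ _
    _ ≤ C₁ * M * |p - q| + C₂ * M * |x - x'| :=
        add_le_add (hv₁ S M v hv hp hq) (hv₂ S M v hv hq)
    _ ≤ |C₁| * M * dist (x, p) (x', q) + |C₂| * M * dist (x, p) (x', q) := by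
        gcongr
        exacts [le_abs_self _, le_max_right _ _, le_abs_self _, le_max_left _ _]
    _ = (|C₁| + |C₂|) * M * dist (x, p) (x', q) := by ring

theorem interiorBound_id : InteriorBound id := fun R hR =>
  ⟨1, (eventually_mem_set.2 (ball_mem_nhds 0 hR)).mono fun z hz S M v hv hzS => by
    simpa using hv.abs_apply_le z ⟨hz, fun h => hzS h.2⟩⟩

theorem interiorBound_pY : InteriorBound pY :=
  interiorBound_id.comp_pY isFirstOrder_id

theorem interiorBound_pXX : InteriorBound pXX := by
  intro R hR
  obtain ⟨C, hC⟩ := interiorBound_pY.comp_pY isFirstOrder_pY R hR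
  refine ⟨C, ?_⟩
  filter_upwards [hC, ball_mem_nhds 0 hR, ball_mem_nhds 0 one_pos] with z hz hzR hz1 S M v hv hzS
  have hx : |z.1| ≤ 1 := (norm_fst_le z).trans (mem_ball_zero_iff.1 hz1).le
  have hlap : pXX v z = -(z.1 ^ 2 * pYY v z) :=
    eq_neg_of_add_eq_zero_left (hv.grushinLap_eq_zero z ⟨hzR, fun h => hzS h.2⟩)
  calc |pXX v z| = |z.1| ^ 2 * |pYY v z| := by rw [hlap, abs_neg, abs_mul, abs_pow]
    _ ≤ |pYY v z| := mul_le_of_le_one_left (abs_nonneg _) (pow_le_one₀ (abs_nonneg _) hx)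
    _ ≤ C * M := hz S M v hv hzS

theorem interiorBound_pX : InteriorBound pX := by
  intro R hR
  obtain ⟨C, hC⟩ := interiorBound_pXX R hR
  obtain ⟨δ, hδ, hball⟩ := Metric.eventually_nhds_iff_ball.1 (hC.and (ball_mem_nhds 0 hR))
  refine ⟨2 / (δ / 2) + C * (δ / 2), ?_⟩
  filter_upwards [ball_mem_nhds 0 (half_pos hδ)] with z hz S M v hv hzS
  obtain ⟨hx, hy⟩ : |z.1| < δ / 2 ∧ |z.2| < δ / 2 := by simpa [Prod.norm_def] using hz
  have hseg {t : ℝ} (ht : t ∈ Icc z.1 (z.1 + δ / 2)) : (t, z.2) ∈ ball (0 : ℝ × ℝ) δ := by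
    have : |t| < δ := abs_lt.2 (by constructor <;> linarith [ht.1, ht.2, abs_lt.1 hx])
    simpa [Prod.norm_def] using ⟨this, hy.trans (half_lt_self hδ)⟩
  have hsmooth {t : ℝ} (ht : t ∈ Icc z.1 (z.1 + δ / 2)) : ContDiffAt ℝ 2 v (t, z.2) :=
    hv.contDiffAt_of_notMem (hball _ (hseg ht)).2 hzS
  calc |pX v z| ≤ 2 * M / (δ / 2) + C * M * (δ / 2) :=
        abs_deriv_le_of_abs_deriv_deriv_le (half_pos hδ)
          (fun t ht => hasDerivAt_pX ((hsmooth ht).differentiableAt two_ne_zero))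
          (fun t ht => hasDerivAt_pX (isFirstOrder_pX.differentiableAt (hsmooth ht)))
          (fun t ht => hv.abs_apply_le _ ⟨(hball _ (hseg ht)).2, fun h => hzS h.2⟩)
          (fun t ht => (hball _ (hseg ht)).1 S M v hv hzS)
    _ = (2 / (δ / 2) + C * (δ / 2)) * M := by ring

theorem interiorLipschitz_id : InteriorLipschitz id :=
  interiorBound_id.interiorLipschitz interiorBound_pX isFirstOrder_id

theorem interiorLipschitz_pX : InteriorLipschitz pX :=
  interiorBound_pX.interiorLipschitz interiorBound_pXX isFirstOrder_pX

theorem interiorLipschitz_pY : InteriorLipschitz pY :=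
  interiorLipschitz_id.comp_pY isFirstOrder_id

end InteriorEstimatesOfOperators

section RemovableSingularities

theorem exists_tendsto_of_eventually_dist_le {X Y : Type*} [PseudoMetricSpace X]
    [PseudoMetricSpace Y] [CompleteSpace Y] {f : X → Y} {a : X} {D : Set X} {K : ℝ}
    [(𝓝[≠] a).NeBot] (hD : Dense D) (hcont : ∀ᶠ x in 𝓝[≠] a, ContinuousAt f x)
    (hf : ∀ᶠ w in 𝓝 (a, a), w.1 ∈ D → w.2 ∈ D → dist (f w.1) (f w.2) ≤ K * dist w.1 w.2) :
    ∃ b, Tendsto f (𝓝[≠] a) (𝓝 b) := by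
  have hle : 𝓝[≠] a ×ˢ 𝓝[≠] a ≤ 𝓝 (a, a) := by
    rw [nhds_prod_eq]
    exact prod_mono nhdsWithin_le_nhds nhdsWithin_le_nhds
  have hlip : ∀ᶠ w in 𝓝[≠] a ×ˢ 𝓝[≠] a, dist (f w.1) (f w.2) ≤ K * dist w.1 w.2 := by
    filter_upwards [hle hf.eventually_nhds, hcont.prod_mk hcont] with w hw hfw
    have := mem_closure_iff_nhdsWithin_neBot.1 ((hD.prod hD) w)
    have hleft : ContinuousAt (fun w => dist (f w.1) (f w.2)) w :=
      (hfw.1.comp continuousAt_fst).dist (hfw.2.comp continuousAt_snd)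
    have hright : ContinuousAt (fun w : X × X => K * dist w.1 w.2) w := by fun_prop
    refine le_of_tendsto_of_tendsto (hleft.mono_left nhdsWithin_le_nhds)
      (hright.mono_left (nhdsWithin_le_nhds (s := D ×ˢ D))) ?_
    filter_upwards [nhdsWithin_le_nhds hw, self_mem_nhdsWithin] with w' hw' hwD
    exact hw' hwD.1 hwD.2
  have hdist : Tendsto (fun w : X × X => K * dist w.1 w.2) (𝓝 (a, a)) (𝓝 0) :=
    (by fun_prop : Continuous _).tendsto' _ _ (by simp)
  refine cauchy_map_iff_exists_tendsto.1 (cauchy_map_iff.2 ⟨inferInstance, ?_⟩)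
  exact tendsto_uniformity_iff_dist_tendsto_zero.2 <|
    squeeze_zero' (.of_forall fun _ => dist_nonneg) hlip (hdist.mono_left hle)

theorem update_eventuallyEq_nhds_of_ne {X Y : Type*} [TopologicalSpace X] [T1Space X]
    [DecidableEq X] {x y : X} (hy : y ≠ x) (f : X → Y) (a : Y) : update f x a =ᶠ[𝓝 y] f :=
  (isOpen_ne.eventually_mem hy).mono fun _ hw => update_of_ne hw a f

section NormedSpace

variable {E F : Type*} [NormedAddCommGroup E] [NormedSpace ℝ E] [NormedAddCommGroup F]
  [NormedSpace ℝ F] {f : E → F} {x : E}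

theorem hasFDerivAt_of_tendsto_fderiv {A : E →L[ℝ] F}
    (hdiff : ∀ᶠ y in 𝓝[≠] x, DifferentiableAt ℝ f y) (hcont : ContinuousAt f x)
    (hA : Tendsto (fderiv ℝ f) (𝓝[≠] x) (𝓝 A)) : HasFDerivAt f A x := by
  refine .of_isLittleO <| Asymptotics.isLittleO_iff.2 fun ε hε => ?_
  have hclose : ∀ᶠ y in 𝓝[≠] x, ‖fderiv ℝ f y - A‖ ≤ ε :=
    (tendsto_iff_norm_sub_tendsto_zero.1 hA).eventually_le_const hε
  obtain ⟨δ, hδ, hball⟩ :=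
    Metric.eventually_nhds_iff_ball.1 (eventually_nhdsWithin_iff.1 (hdiff.and hclose))
  filter_upwards [ball_mem_nhds x hδ] with y hy
  rcases eq_or_ne y x with rfl | hyx
  · simp
  -- The segment is traversed from `y` to `x`, so that `x` is the endpoint without derivative.
  let p : ℝ → E := AffineMap.lineMap y x
  have hp {t : ℝ} (ht : t ∈ Ico (0 : ℝ) 1) : p t ∈ ball x δ ∧ p t ∈ ({x} : Set E)ᶜ := by
    refine ⟨(convex_ball x δ).lineMap_mem hy (mem_ball_self hδ) ⟨ht.1, ht.2.le⟩, fun h => ?_⟩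
    exact ht.2.ne (AffineMap.lineMap_eq_right_iff.1 h |>.resolve_left hyx)
  have hderiv (t) (ht : t ∈ Ico (0 : ℝ) 1) :
      HasDerivAt (fun t => f (p t) - A (p t)) ((fderiv ℝ f (p t) - A) (x - y)) t :=
    ((hball _ (hp ht).1 (hp ht).2).1.hasFDerivAt.sub A.hasFDerivAt).comp_hasDerivAt t
      AffineMap.hasDerivAt_lineMap
  have hcont' : ContinuousOn (fun t => f (p t) - A (p t)) (Icc 0 1) := fun t ht => by
    rcases ht.2.eq_or_lt with rfl | hlt
    · have hf1 : ContinuousAt f (p 1) := by simpa [p] using hcont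
      have hp1 : ContinuousAt p 1 := AffineMap.lineMap_continuous.continuousAt
      exact ((hf1.comp hp1).sub (A.continuous.continuousAt.comp hp1)).continuousWithinAt
    · exact (hderiv t ⟨ht.1, hlt⟩).continuousAt.continuousWithinAt
  have hbound := norm_image_sub_le_of_norm_deriv_right_le_segment (C := ε * ‖y - x‖) hcont'
    (fun t ht => (hderiv t ht).hasDerivWithinAt) (fun t ht => ?_) 1 (right_mem_Icc.2 zero_le_one)
  · calc ‖f y - f x - A (y - x)‖ = ‖f x - A x - (f y - A y)‖ := by
          rw [map_sub, ← norm_neg]; congr 1; abel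
      _ ≤ ε * ‖y - x‖ := by simpa [p] using hbound
  · rw [norm_sub_rev y]
    exact (fderiv ℝ f (p t) - A).le_of_opNorm_le (hball _ (hp ht).1 (hp ht).2).2 _

variable [DecidableEq E]

theorem contDiffAt_zero_update {a : F} (ha : Tendsto f (𝓝[≠] x) (𝓝 a))
    (hcont : ∀ᶠ y in 𝓝[≠] x, ContinuousAt f y) : ContDiffAt ℝ 0 (update f x a) x := by
  refine contDiffAt_zero.2 ⟨_, eventually_nhdsWithin_iff.1 hcont, fun y hy => ?_⟩
  rcases eq_or_ne y x with rfl | hyx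
  · exact (continuousAt_update_same.2 ha).continuousWithinAt
  · exact ((hy hyx).congr (update_eventuallyEq_nhds_of_ne hyx f a).symm).continuousWithinAt

theorem contDiffAt_succ_update {n : ℕ} {a : F} {A : E →L[ℝ] F} (ha : Tendsto f (𝓝[≠] x) (𝓝 a))
    (hdiff : ∀ᶠ y in 𝓝[≠] x, DifferentiableAt ℝ f y)
    (hA : ContDiffAt ℝ n (update (fderiv ℝ f) x A) x) :
    ContDiffAt ℝ (n + 1) (update f x a) x := by
  have heq {y} (hy : y ≠ x) := update_eventuallyEq_nhds_of_ne hy f a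
  refine contDiffAt_succ_iff_hasFDerivAt.2
    ⟨_, ⟨_, eventually_nhdsWithin_iff.1 hdiff, fun y hy => ?_⟩, hA⟩
  rcases eq_or_ne y x with rfl | hyx
  · rw [update_self]
    refine hasFDerivAt_of_tendsto_fderiv ?_ (continuousAt_update_same.2 ha) ?_
    · filter_upwards [hdiff, self_mem_nhdsWithin] with z hz hzy
      exact hz.congr_of_eventuallyEq (heq hzy)
    · refine (continuousAt_update_same.1 hA.continuousAt).congr' ?_
      filter_upwards [self_mem_nhdsWithin] with z hzy
      exact (heq hzy).fderiv_eq.symm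
  · rw [update_of_ne hyx]
    exact (hy hyx).hasFDerivAt.congr_of_eventuallyEq (heq hyx)

end NormedSpace

variable {u : ℝ × ℝ → ℝ} {z : ℝ × ℝ}

theorem contDiffAt_succ_update_of_partials {n : ℕ} {a b c : ℝ} (ha : Tendsto u (𝓝[≠] z) (𝓝 a))
    (hdiff : ∀ᶠ w in 𝓝[≠] z, DifferentiableAt ℝ u w)
    (hX : ContDiffAt ℝ n (update (pX u) z b) z) (hY : ContDiffAt ℝ n (update (pY u) z c) z) :
    ContDiffAt ℝ (n + 1) (update u z a) z := by
  refine contDiffAt_succ_update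
    (A := b • ContinuousLinearMap.fst ℝ ℝ ℝ + c • ContinuousLinearMap.snd ℝ ℝ ℝ) ha hdiff ?_
  have hsum := (hX.smul (contDiffAt_const (c := ContinuousLinearMap.fst ℝ ℝ ℝ))).add
    (hY.smul (contDiffAt_const (c := ContinuousLinearMap.snd ℝ ℝ ℝ)))
  refine hsum.congr_of_eventuallyEq ?_
  filter_upwards [eventually_nhdsWithin_iff.1 hdiff] with w hw
  rcases eq_or_ne w z with rfl | hwz
  · simp
  · simp [hwz, fderiv_eq_pX_smul_add_pY_smul (hw hwz)]

theorem contDiffAt_one_update {a b c : ℝ} (hu : ∀ᶠ w in 𝓝[≠] z, ContDiffAt ℝ 1 u w)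
    (ha : Tendsto u (𝓝[≠] z) (𝓝 a)) (hX : Tendsto (pX u) (𝓝[≠] z) (𝓝 b))
    (hY : Tendsto (pY u) (𝓝[≠] z) (𝓝 c)) : ContDiffAt ℝ 1 (update u z a) z := by
  have hu1 : ∀ᶠ w in 𝓝[≠] z, ContDiffAt ℝ (0 + 1) u w := by simpa using hu
  simpa using contDiffAt_succ_update_of_partials (n := 0) ha
    (hu.mono fun w hw => hw.differentiableAt one_ne_zero)
    (contDiffAt_zero_update hX (hu1.mono fun w hw => (contDiffAt_pX hw).continuousAt))
    (contDiffAt_zero_update hY (hu1.mono fun w hw => (contDiffAt_pY hw).continuousAt))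

theorem contDiffAt_two_update {a b c d e f : ℝ} (hu : ∀ᶠ w in 𝓝[≠] z, ContDiffAt ℝ 2 u w)
    (ha : Tendsto u (𝓝[≠] z) (𝓝 a)) (hX : Tendsto (pX u) (𝓝[≠] z) (𝓝 b))
    (hY : Tendsto (pY u) (𝓝[≠] z) (𝓝 c)) (hXX : Tendsto (pXX u) (𝓝[≠] z) (𝓝 d))
    (hYX : Tendsto (pY (pX u)) (𝓝[≠] z) (𝓝 e)) (hYY : Tendsto (pYY u) (𝓝[≠] z) (𝓝 f)) :
    ContDiffAt ℝ 2 (update u z a) z := by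
  have hu1 : ∀ᶠ w in 𝓝[≠] z, ContDiffAt ℝ (1 + 1) u w := by simpa [one_add_one_eq_two] using hu
  have hXY : Tendsto (pX (pY u)) (𝓝[≠] z) (𝓝 e) :=
    hYX.congr' (hu.mono fun w hw => (pX_pY_eq_pY_pX hw).symm)
  simpa [one_add_one_eq_two] using contDiffAt_succ_update_of_partials (n := 1) ha
    (hu.mono fun w hw => hw.differentiableAt two_ne_zero)
    (by simpa using contDiffAt_one_update (hu1.mono fun w hw => contDiffAt_pX hw) hX hXX hYX)
    (by simpa using contDiffAt_one_update (hu1.mono fun w hw => contDiffAt_pY hw) hY hXY hYY)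

end RemovableSingularities

section RemovableSingularity

theorem dense_setOf_snd_ne_zero : Dense {z : ℝ × ℝ | z.2 ≠ 0} :=
  (dense_compl_singleton (0 : ℝ)).preimage isOpenMap_snd

variable {u : ℝ × ℝ → ℝ} {R M : ℝ}

theorem InteriorLipschitz.exists_tendsto {T : (ℝ × ℝ → ℝ) → ℝ × ℝ → ℝ} (hT : InteriorLipschitz T)
    (hR : 0 < R) (hu : IsBddHarmonic {0} R M u)
    (hcont : ∀ᶠ z in 𝓝[≠] 0, ContinuousAt (T u) z) : ∃ b, Tendsto (T u) (𝓝[≠] 0) (𝓝 b) := by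
  obtain ⟨C, hC⟩ := hT R hR
  exact exists_tendsto_of_eventually_dist_le dense_setOf_snd_ne_zero hcont
    (hC.mono fun w hw => hw {0} M u hu)

theorem IsBddHarmonic.exists_contDiffAt_update (hR : 0 < R) (hu : IsBddHarmonic {0} R M u) :
    ∃ a, ContDiffAt ℝ 2 (update u 0 a) 0 := by
  have hmem : ∀ᶠ z in 𝓝[≠] (0 : ℝ × ℝ), z ∈ puncturedSquare {0} R := by
    filter_upwards [nhdsWithin_le_nhds (ball_mem_nhds 0 hR), self_mem_nhdsWithin] with z hz hz0
    exact ⟨hz, fun h => hz0 (Prod.ext h.1 h.2)⟩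
  have hu2 : ∀ᶠ z in 𝓝[≠] 0, ContDiffAt ℝ 2 u z := hmem.mono hu.contDiffAt
  have hu1 : ∀ᶠ z in 𝓝[≠] 0, ContDiffAt ℝ (0 + 1 + 1) u z := by
    simpa [one_add_one_eq_two] using hu2
  obtain ⟨a, ha⟩ := interiorLipschitz_id.exists_tendsto hR hu (hu2.mono fun _ h => h.continuousAt)
  obtain ⟨b, hb⟩ := interiorLipschitz_pX.exists_tendsto hR hu
    (hu1.mono fun _ h => (contDiffAt_pX h).continuousAt)
  obtain ⟨c, hc⟩ := interiorLipschitz_pY.exists_tendsto hR hu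
    (hu1.mono fun _ h => (contDiffAt_pY h).continuousAt)
  obtain ⟨e, he⟩ := (interiorLipschitz_pX.comp_pY isFirstOrder_pX).exists_tendsto hR hu
    (hu1.mono fun _ h => (contDiffAt_pY (contDiffAt_pX h)).continuousAt)
  obtain ⟨f, hf⟩ := (interiorLipschitz_pY.comp_pY isFirstOrder_pY).exists_tendsto hR hu
    (hu1.mono fun _ h => (contDiffAt_pY (contDiffAt_pY h)).continuousAt)
  have hXX : Tendsto (pXX u) (𝓝[≠] 0) (𝓝 (-((0 : ℝ × ℝ).1 ^ 2 * f))) := by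
    refine (((continuousAt_fst.pow 2).mono_left nhdsWithin_le_nhds).mul hf).neg.congr' ?_
    filter_upwards [hmem] with z hz
    exact (eq_neg_of_add_eq_zero_left (hu.grushinLap_eq_zero z hz)).symm
  exact ⟨a, contDiffAt_two_update hu2 ha hb hc hXX he hf⟩

theorem exists_isBddHarmonic_of_eventually {Ω : Set (ℝ × ℝ)} (hΩ : IsOpen Ω) (h0 : 0 ∈ Ω)
    (hreg : ContDiffOn ℝ 2 u (Ω \ {0})) (hharm : ∀ z ∈ Ω \ {0}, grushinLap u z = 0)
    (hbd : ∃ M, ∀ᶠ z in 𝓝[≠] 0, |u z| ≤ M) : ∃ R > 0, ∃ M, IsBddHarmonic {0} R M u := by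
  obtain ⟨M, hM⟩ := hbd
  obtain ⟨R, hR, hball⟩ := Metric.eventually_nhds_iff_ball.1
    ((hΩ.eventually_mem h0).and (eventually_nhdsWithin_iff.1 hM))
  have hne {z} (hz : z ∈ puncturedSquare {0} R) : z ≠ 0 := by
    rintro rfl
    exact hz.2 ⟨rfl, rfl⟩
  exact ⟨R, hR, M, finite_singleton 0,
    fun z hz => hreg.contDiffAt
      ((hΩ.sdiff isClosed_singleton).mem_nhds ⟨(hball z hz.1).1, hne hz⟩),
    fun z hz => hharm z ⟨(hball z hz.1).1, hne hz⟩, fun z hz => (hball z hz.1).2 (hne hz)⟩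

theorem grushinLap_eq_zero_of_eventually_nhdsNE {z : ℝ × ℝ} (hu : ContDiffAt ℝ 2 u z)
    (h : ∀ᶠ w in 𝓝[≠] z, grushinLap u w = 0) : grushinLap u z = 0 :=
  tendsto_nhds_unique ((continuousAt_grushinLap hu).mono_left nhdsWithin_le_nhds)
    (tendsto_const_nhds.congr' (h.mono fun _ hw => hw.symm))

theorem grushin_removable_singularity_general {Ω : Set (ℝ × ℝ)} (hΩ : IsOpen Ω) (h0 : 0 ∈ Ω)
    (hreg : ContDiffOn ℝ 2 u (Ω \ {0})) (hharm : ∀ z ∈ Ω \ {0}, grushinLap u z = 0)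
    (hbd : ∃ M, ∀ᶠ z in 𝓝[≠] 0, |u z| ≤ M) :
    ∃ v, ContDiffOn ℝ 2 v Ω ∧ (∀ z ∈ Ω, grushinLap v z = 0) ∧ ∀ z ∈ Ω \ {0}, v z = u z := by
  obtain ⟨R, hR, M, hu⟩ := exists_isBddHarmonic_of_eventually hΩ h0 hreg hharm hbd
  obtain ⟨a, ha⟩ := hu.exists_contDiffAt_update hR
  have heq {z} (hz : z ≠ 0) := update_eventuallyEq_nhds_of_ne hz u a
  have hharm' (z) (hz : z ∈ Ω \ {0}) : grushinLap (update u 0 a) z = 0 :=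
    (grushinLap_congr (heq hz.2)).trans (hharm z hz)
  refine ⟨update u 0 a, fun z hz => ContDiffAt.contDiffWithinAt ?_, fun z hz => ?_,
    fun z hz => update_of_ne hz.2 a u⟩ <;> rcases eq_or_ne z 0 with rfl | hz0
  · exact ha
  · exact (hreg.contDiffAt ((hΩ.sdiff isClosed_singleton).mem_nhds ⟨hz, hz0⟩)).congr_of_eventuallyEq
      (heq hz0)
  · refine grushinLap_eq_zero_of_eventually_nhdsNE ha ?_
    filter_upwards [nhdsWithin_le_nhds (hΩ.mem_nhds h0), self_mem_nhdsWithin] with w hw hw0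
    exact hharm' w ⟨hw, hw0⟩
  · exact hharm' z ⟨hz, hz0⟩

end RemovableSingularity

/-- removable singularity. If `u` is bounded and `Δ_G`-harmonic in
`B_r \ {0}`, then it extends to a `Δ_G`-harmonic function on all of `B_r`. -/
theorem grushin_removable_singularity (r : ℝ) (hr : 0 < r) (u : ℝ × ℝ → ℝ)
    (hreg : ContDiffOn ℝ 2 u (gBall 0 r \ {(0 : ℝ × ℝ)}))
    (hharm : ∀ p ∈ gBall 0 r \ {(0 : ℝ × ℝ)}, grushinLap u p = 0)
    (hbd : ∃ M : ℝ, ∀ p ∈ gBall 0 r \ {(0 : ℝ × ℝ)}, |u p| ≤ M) :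
    ∃ v : ℝ × ℝ → ℝ, ContDiffOn ℝ 2 v (gBall 0 r) ∧
      (∀ p ∈ gBall 0 r, grushinLap v p = 0) ∧
      ∀ p ∈ gBall 0 r \ {(0 : ℝ × ℝ)}, v p = u p := by
  have hΩ := isOpen_gBall 0 r
  have h0 := mem_gBall_self (c := 0) hr
  exact grushin_removable_singularity_general hΩ h0 hreg hharm <| hbd.imp fun _ hM =>
    eventually_of_mem (sdiff_mem_nhdsWithin_compl (hΩ.mem_nhds h0) {0}) hM
end

section
/- Let Ω ⊂ ℝ² be a bounded T-convex domain, f : ℝ → ℝ Lipschitz continuous, and let u ∈ C²(Ω) ∩ C(closure of Ω) solve Δ_G u + f(u) = 0 in Ω with u = ψ on ∂Ω. Assume that for any ξ₁, ξ₂ ∈ ∂Ω with ξ₂ = ξ₁ + (0, α) for some α > 0, and for each s ∈ (0, α): if ξ₁ + (0,s) ∈ Ω then ψ(ξ₁) < u(ξ₁ + (0,s)) < ψ(ξ₂), while if ξ₁ + (0,s) ∈ ∂Ω then ψ(ξ₁) < ψ(ξ₁ + (0,s)) < ψ(ξ₂). Then u is strictly monotone in the vertical direction: for every ξ ∈ ℝ²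 and 0 < s₁ < s₂ such that both ξ + (0, s₁) and ξ + (0, s₂) lie in Ω, one has u(ξ + (0, s₁)) < u(ξ + (0, s₂)). Moreover, u is the unique solution of the boundary value problem in C²(Ω) ∩ C(closure of Ω) satisfying the first condition above. -/
open MeasureTheory

/-- A bounded domain `Ω ⊂ ℝ²` is `T`-convex when vertical segments joining two of its
points lie in `Ω`. -/
def TConvex (Ω : Set (ℝ × ℝ)) : Prop :=
  ∀ ξ ∈ Ω, ∀ α > (0 : ℝ), ξ + (0, α) ∈ Ω → ∀ s ∈ Set.Ioo (0 : ℝ) α, ξ + (0, s) ∈ Ω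

/-!
Slide the graph vertically. Let `a` and `b` solve `u_xx + k(x) u_yy + f(x, u) = 0`, `0 ≤ k`, with
the same boundary values. For `t > 0` the difference `w p = b (p + (0, t)) - a p` lives on the
overlap `Ω ∩ (Ω - (0, t))`; on its frontier `p` or `p + (0, t)` is a boundary point of `Ω`, and the
ordering conditions give `0 < w`. Were `w ≤ 0` somewhere for some `t > 0`, there would be a largest
such `t`, by compactness of the closure of the set of admissible pairs `(p, t)`. At this `t` we have
`0 ≤ w` on the whole overlap, so the monotonicity of `y ↦ f(x, y) + L y` yields the linear
inequality `w_xx + k w_yy ≤ L w`, while `w` vanishes at some point of the overlap: a strong maximum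
principle gives the contradiction. `T`-convexity ensures that limits of admissible pairs still have
their midpoint in the closure of `Ω`; this is what allows the ordering conditions to compare two
boundary points.

The operator degenerates where `k = 0`, so Hopf's strong maximum principle is not available. Since
`w` is positive on the whole frontier, it suffices to compare with the barrier `ε exp (m x)`, which
lies below `w` there and depends only on the nondegenerate direction. At a negative interior minimum
of `w - ε exp (m x)` one gets `m² ε exp (m x) ≤ L w` together with `0 ≤ w < ε exp (m x)`, which is
impossible once `m² > |L|`.

For uniqueness, apply the sliding comparison to two different solutions in both orders and let
`t → 0`.
-/

/-! ### Second partial derivatives -/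

lemma deriv_deriv_nonneg_of_isLocalMin {g : ℝ → ℝ} {x : ℝ} (hg : ContinuousAt g x)
    (hmin : IsLocalMin g x) : 0 ≤ deriv (deriv g) x := by
  by_contra! hneg
  have hmax : IsLocalMax g x := isLocalMax_of_deriv_deriv_neg hneg hmin.deriv_eq_zero hg
  have hconst : g =ᶠ[nhds x] fun _ => g x := by
    filter_upwards [hmin, hmax] with y hge hle using le_antisymm hle hge
  have hzero : deriv (deriv g) x = 0 := by simpa using hconst.deriv.deriv_eq
  exact hneg.ne hzero

lemma pXX_eq_iteratedDeriv (u : ℝ × ℝ → ℝ) (p : ℝ × ℝ) :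
    pXX u p = iteratedDeriv 2 (fun x => u (x, p.2)) p.1 := by
  rw [pXX, iteratedDeriv_succ, iteratedDeriv_one]

lemma pYY_eq_iteratedDeriv (u : ℝ × ℝ → ℝ) (p : ℝ × ℝ) :
    pYY u p = iteratedDeriv 2 (fun y => u (p.1, y)) p.2 := by
  rw [pYY, iteratedDeriv_succ, iteratedDeriv_one]

lemma pXX_sub {u v : ℝ × ℝ → ℝ} {p : ℝ × ℝ} (hu : ContDiffAt ℝ 2 u p)
    (hv : ContDiffAt ℝ 2 v p) : pXX (fun q => u q - v q) p = pXX u p - pXX v p := by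
  have hslice : ContDiffAt ℝ 2 (fun x : ℝ => (x, p.2)) p.1 := by fun_prop
  simp only [pXX_eq_iteratedDeriv]
  exact iteratedDeriv_fun_sub (hu.comp p.1 hslice) (hv.comp p.1 hslice)

lemma pYY_sub {u v : ℝ × ℝ → ℝ} {p : ℝ × ℝ} (hu : ContDiffAt ℝ 2 u p)
    (hv : ContDiffAt ℝ 2 v p) : pYY (fun q => u q - v q) p = pYY u p - pYY v p := by
  have hslice : ContDiffAt ℝ 2 (fun y : ℝ => (p.1, y)) p.2 := by fun_prop
  simp only [pYY_eq_iteratedDeriv]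
  exact iteratedDeriv_fun_sub (hu.comp p.2 hslice) (hv.comp p.2 hslice)

lemma pXX_nonneg_of_isLocalMin {u : ℝ × ℝ → ℝ} {p : ℝ × ℝ} (hu : ContinuousAt u p)
    (hmin : IsLocalMin u p) : 0 ≤ pXX u p :=
  have hslice : ContinuousAt (fun x : ℝ => (x, p.2)) p.1 := by fun_prop
  deriv_deriv_nonneg_of_isLocalMin (hu.comp (f := fun x : ℝ => (x, p.2)) hslice)
    (hslice.eventually hmin)

lemma pYY_nonneg_of_isLocalMin {u : ℝ × ℝ → ℝ} {p : ℝ × ℝ} (hu : ContinuousAt u p)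
    (hmin : IsLocalMin u p) : 0 ≤ pYY u p :=
  have hslice : ContinuousAt (fun y : ℝ => (p.1, y)) p.2 := by fun_prop
  deriv_deriv_nonneg_of_isLocalMin (hu.comp (f := fun y : ℝ => (p.1, y)) hslice)
    (hslice.eventually hmin)

lemma pXX_comp_add_vertical (u : ℝ × ℝ → ℝ) (t : ℝ) (p : ℝ × ℝ) :
    pXX (fun q => u (q + (0, t))) p = pXX u (p + (0, t)) := by
  simp [pXX]

lemma pYY_comp_add_vertical (u : ℝ × ℝ → ℝ) (t : ℝ) (p : ℝ × ℝ) :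
    pYY (fun q => u (q + (0, t))) p = pYY u (p + (0, t)) := by
  simpa [pYY_eq_iteratedDeriv] using
    congrFun (iteratedDeriv_comp_add_const 2 (fun y => u (p.1, y)) t) p.2

lemma pXX_mul_exp_fst (ε m : ℝ) (p : ℝ × ℝ) :
    pXX (fun q => ε * Real.exp (m * q.1)) p = m ^ 2 * (ε * Real.exp (m * p.1)) := by
  rw [pXX_eq_iteratedDeriv, iteratedDeriv_const_mul_field, iteratedDeriv_exp_const_mul]
  ring

lemma pYY_comp_fst (g : ℝ → ℝ) (p : ℝ × ℝ) : pYY (fun q => g q.1) p = 0 := by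
  simp [pYY]

/-! ### A maximum principle for degenerate operators -/

lemma pXX_add_mul_pYY_le_of_isLocalMin_sub {u v : ℝ × ℝ → ℝ} {p : ℝ × ℝ} {c : ℝ} (hc : 0 ≤ c)
    (hu : ContDiffAt ℝ 2 u p) (hv : ContDiffAt ℝ 2 v p)
    (hmin : IsLocalMin (fun q => u q - v q) p) :
    pXX v p + c * pYY v p ≤ pXX u p + c * pYY u p := by
  have hcont : ContinuousAt (fun q => u q - v q) p := (hu.sub hv).continuousAt
  have hxx : 0 ≤ pXX u p - pXX v p := pXX_sub hu hv ▸ pXX_nonneg_of_isLocalMin hcont hmin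
  have hyy : 0 ≤ pYY u p - pYY v p := pYY_sub hu hv ▸ pYY_nonneg_of_isLocalMin hcont hmin
  linarith [mul_nonneg hc hyy]

lemma exists_pos_mul_le_of_isCompact {X : Type*} [TopologicalSpace X] {K : Set X}
    (hK : IsCompact K) {g w : X → ℝ} (hg : ContinuousOn g K) (hw : ContinuousOn w K)
    (hg_pos : ∀ p ∈ K, 0 < g p) (hw_pos : ∀ p ∈ K, 0 < w p) :
    ∃ ε > 0, ∀ p ∈ K, ε * g p ≤ w p := by
  obtain ⟨ε, hε, hle⟩ := hK.exists_forall_le' (hw.div hg fun p hp => (hg_pos p hp).ne')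
    fun p hp => div_pos (hw_pos p hp) (hg_pos p hp)
  exact ⟨ε, hε, fun p hp => (le_div_iff₀ (hg_pos p hp)).mp (hle p hp)⟩

theorem pos_of_nonneg_of_pos_frontier {D : Set (ℝ × ℝ)} (hDo : IsOpen D)
    (hDb : Bornology.IsBounded D) {k : ℝ × ℝ → ℝ} (hk : ∀ p ∈ D, 0 ≤ k p) {c : ℝ}
    {w : ℝ × ℝ → ℝ} (hw_cont : ContinuousOn w (closure D)) (hw_reg : ContDiffOn ℝ 2 w D)
    (hw_super : ∀ p ∈ D, pXX w p + k p * pYY w p ≤ c * w p)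
    (hw_nonneg : ∀ p ∈ D, 0 ≤ w p) (hw_frontier : ∀ p ∈ frontier D, 0 < w p) :
    ∀ p ∈ D, 0 < w p := by
  intro p₀ hp₀
  by_contra! hw₀
  set m : ℝ := |c| + 1
  have hexp : Continuous fun p : ℝ × ℝ => Real.exp (m * p.1) := by fun_prop
  obtain ⟨ε, hε, hbarrier⟩ := exists_pos_mul_le_of_isCompact
    (hDb.isCompact_closure.of_isClosed_subset isClosed_frontier frontier_subset_closure)
    hexp.continuousOn (hw_cont.mono frontier_subset_closure) (fun _ _ => Real.exp_pos _)
    hw_frontier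
  obtain ⟨q, hq_closure, hq_min⟩ := hDb.isCompact_closure.exists_isMinOn
    ⟨p₀, subset_closure hp₀⟩ (hw_cont.sub (hexp.const_mul ε).continuousOn)
  set B : ℝ × ℝ → ℝ := fun p => ε * Real.exp (m * p.1)
  have hB_pos (p : ℝ × ℝ) : 0 < B p := mul_pos hε (Real.exp_pos _)
  have hq_lt : w q < B q := by
    have hle : w q - B q ≤ w p₀ - B p₀ := hq_min (subset_closure hp₀)
    linarith [hB_pos p₀]
  have hq : q ∈ D := by
    by_contra hqD
    exact (hbarrier q (hDo.frontier_eq ▸ ⟨hq_closure, hqD⟩)).not_gt hq_lt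
  have hDq : D ∈ nhds q := hDo.mem_nhds hq
  have hB_super : m ^ 2 * B q ≤ c * w q := by
    have hle := pXX_add_mul_pYY_le_of_isLocalMin_sub (hk q hq) (hw_reg.contDiffAt hDq)
      (v := B) (by fun_prop) (hq_min.isLocalMin (Filter.mem_of_superset hDq subset_closure))
    rw [pXX_mul_exp_fst, pYY_comp_fst (fun x => ε * Real.exp (m * x)), mul_zero, add_zero] at hle
    exact hle.trans (hw_super q hq)
  have hlt : c * w q < m ^ 2 * B q := calc
    c * w q ≤ |c| * w q := mul_le_mul_of_nonneg_right (le_abs_self c) (hw_nonneg q hq)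
    _ ≤ |c| * B q := mul_le_mul_of_nonneg_left hq_lt.le (abs_nonneg c)
    _ < m ^ 2 * B q := mul_lt_mul_of_pos_right (by nlinarith [abs_nonneg c]) (hB_pos q)
  exact hB_super.not_gt hlt

/-! ### Vertical pairs -/

lemma exists_pos_add_smul_mem_frontier {E : Type*} [NormedAddCommGroup E] [NormedSpace ℝ E]
    {Ω : Set E} (hΩo : IsOpen Ω) (hΩb : Bornology.IsBounded Ω) {p v : E} (hp : p ∈ Ω)
    (hv : v ≠ 0) : ∃ t > (0 : ℝ), p + t • v ∈ frontier Ω := by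
  by_contra! hfrontier
  have hray : (fun t : ℝ => p + t • v) '' Set.Ici 0 ⊆ Ω := by
    refine (isPreconnected_Ici.image _ (by fun_prop)).subset_of_closure_inter_subset hΩo
      ⟨p, ⟨0, by simp, by simp⟩, hp⟩ ?_
    rintro _ ⟨hclosure, t, ht, rfl⟩
    by_contra hout
    have ht₀ : 0 < t := (Set.mem_Ici.mp ht).lt_of_ne (by rintro rfl; simp [hp] at hout)
    exact hfrontier t ht₀ (hΩo.frontier_eq ▸ ⟨hclosure, hout⟩)
  obtain ⟨R, hR, hball⟩ := hΩb.subset_closedBall_lt 0 p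
  have hmem := hball (hray ⟨(R + 1) / ‖v‖, Set.mem_Ici.mpr (by positivity), rfl⟩)
  rw [mem_closedBall_iff_norm, add_sub_cancel_left, norm_smul, Real.norm_of_nonneg (by positivity),
    div_mul_cancel₀ _ (norm_ne_zero_iff.mpr hv)] at hmem
  linarith

/-- The pairs `(p, s)` with `τ ≤ s` for which `p` and its vertical translate by `s` lie in `Ω`: the
configurations compared by the sliding method. -/
def verticalPairs (Ω : Set (ℝ × ℝ)) (τ : ℝ) : Set ((ℝ × ℝ) × ℝ) :=
  {z | τ ≤ z.2 ∧ z.1 ∈ Ω ∧ z.1 + (0, z.2) ∈ Ω}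

lemma isCompact_closure_verticalPairs {Ω : Set (ℝ × ℝ)} (hΩb : Bornology.IsBounded Ω) (τ : ℝ) :
    IsCompact (closure (verticalPairs Ω τ)) := by
  have himage : IsCompact ((fun z : (ℝ × ℝ) × (ℝ × ℝ) => (z.1, z.2.2 - z.1.2)) ''
      (closure Ω ×ˢ closure Ω)) :=
    (hΩb.isCompact_closure.prod hΩb.isCompact_closure).image (by fun_prop)
  refine himage.closure_of_subset ?_
  rintro ⟨p, s⟩ ⟨-, hp, hps⟩
  exact ⟨(p, p + (0, s)), ⟨subset_closure hp, subset_closure hps⟩, by simp⟩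

lemma closure_verticalPairs_subset (Ω : Set (ℝ × ℝ)) (τ : ℝ) :
    closure (verticalPairs Ω τ) ⊆ {z | τ ≤ z.2 ∧ z.1 ∈ closure Ω ∧ z.1 + (0, z.2) ∈ closure Ω} := by
  refine closure_minimal
    (fun z hz => ⟨hz.1, subset_closure hz.2.1, subset_closure hz.2.2⟩) ?_
  exact (isClosed_Ici.preimage continuous_snd).inter <|
    (isClosed_closure.preimage continuous_fst).inter (isClosed_closure.preimage (by fun_prop))

lemma TConvex.midpoint_mem_closure {Ω : Set (ℝ × ℝ)} (hΩT : TConvex Ω) {τ : ℝ} (hτ : 0 < τ)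
    {z : (ℝ × ℝ) × ℝ} (hz : z ∈ closure (verticalPairs Ω τ)) :
    z.1 + (0, z.2 / 2) ∈ closure Ω := by
  have hmaps : Set.MapsTo (fun z : (ℝ × ℝ) × ℝ => z.1 + (0, z.2 / 2)) (verticalPairs Ω τ) Ω :=
    fun z ⟨hle, hp, hps⟩ =>
      have hs : 0 < z.2 := hτ.trans_le hle
      hΩT z.1 hp z.2 hs hps (z.2 / 2) ⟨half_pos hs, half_lt_self hs⟩
  exact hmaps.closure (by fun_prop) hz

/-- The set on which a function on `Ω` can be compared with its vertical translate by `t`. -/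
def slideOverlap (Ω : Set (ℝ × ℝ)) (t : ℝ) : Set (ℝ × ℝ) := {p | p ∈ Ω ∧ p + (0, t) ∈ Ω}

lemma isOpen_slideOverlap {Ω : Set (ℝ × ℝ)} (hΩo : IsOpen Ω) (t : ℝ) :
    IsOpen (slideOverlap Ω t) :=
  hΩo.inter (hΩo.preimage (by fun_prop))

lemma mem_closure_verticalPairs_of_mem_closure_slideOverlap {Ω : Set (ℝ × ℝ)} {t : ℝ}
    {p : ℝ × ℝ} (hp : p ∈ closure (slideOverlap Ω t)) : (p, t) ∈ closure (verticalPairs Ω t) :=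
  have hmaps : Set.MapsTo (fun p => (p, t)) (slideOverlap Ω t) (verticalPairs Ω t) :=
    fun _ hp => ⟨le_rfl, hp⟩
  hmaps.closure (by fun_prop) hp

lemma le_of_forall_gt_le_slide {Ω : Set (ℝ × ℝ)} (hΩo : IsOpen Ω) {u : ℝ × ℝ → ℝ}
    (hu : ContinuousOn u Ω) {p : ℝ × ℝ} {t c : ℝ} (hpt : p + (0, t) ∈ Ω)
    (hle : ∀ s > t, p + (0, s) ∈ Ω → c ≤ u (p + (0, s))) : c ≤ u (p + (0, t)) := by
  have hslide : ContinuousAt (fun s : ℝ => p + (0, s)) t := by fun_prop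
  have hright : Filter.Tendsto (fun s : ℝ => u (p + (0, s))) (nhdsWithin t (Set.Ioi t))
      (nhds (u (p + (0, t)))) :=
    ((hu.continuousAt (hΩo.mem_nhds hpt)).tendsto.comp hslide).mono_left nhdsWithin_le_nhds
  refine ge_of_tendsto hright ?_
  filter_upwards [self_mem_nhdsWithin,
    nhdsWithin_le_nhds (hslide.eventually (hΩo.mem_nhds hpt))] with s hs hps using hle s hs hps

/-! ### The sliding comparison -/

/-- The ordering condition along vertical segments: for every such segment with endpoints on the
boundary of `Ω`, the values of `g` at the inner points belonging to `S` lie strictly between the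
values of `ψ` at the endpoints. The two cases needed are `S = Ω` with `g` a solution, and
`S = frontier Ω` with `g = ψ`. -/
def BetweenEndpoints (Ω : Set (ℝ × ℝ)) (ψ : ℝ × ℝ → ℝ) (S : Set (ℝ × ℝ)) (g : ℝ × ℝ → ℝ) : Prop :=
  ∀ ξ ∈ frontier Ω, ∀ α > (0 : ℝ), ξ + (0, α) ∈ frontier Ω → ∀ s ∈ Set.Ioo (0 : ℝ) α,
    ξ + (0, s) ∈ S → ψ ξ < g (ξ + (0, s)) ∧ g (ξ + (0, s)) < ψ (ξ + (0, α))

namespace BetweenEndpoints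

variable {Ω : Set (ℝ × ℝ)} {ψ u : ℝ × ℝ → ℝ}

lemma lt_boundary_above (hu : BetweenEndpoints Ω ψ Ω u) (hΩo : IsOpen Ω)
    (hΩb : Bornology.IsBounded Ω) {ξ : ℝ × ℝ} {s : ℝ} (hs : 0 < s) (hξ : ξ ∈ Ω)
    (hξs : ξ + (0, s) ∈ frontier Ω) : u ξ < ψ (ξ + (0, s)) := by
  obtain ⟨t, ht, hbelow⟩ := exists_pos_add_smul_mem_frontier hΩo hΩb hξ
    (v := ((0, -1) : ℝ × ℝ)) (by simp)
  have hmid : ξ + t • (0, -1) + (0, t) = ξ := by ext <;> simp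
  have htop : ξ + t • (0, -1) + (0, t + s) = ξ + (0, s) := by ext <;> simp
  have hlt := (hu _ hbelow (t + s) (by positivity) (htop ▸ hξs) t ⟨ht, by linarith⟩
    (hmid.symm ▸ hξ)).2
  rwa [hmid, htop] at hlt

lemma boundary_below_lt (hu : BetweenEndpoints Ω ψ Ω u) (hΩo : IsOpen Ω)
    (hΩb : Bornology.IsBounded Ω) {ξ : ℝ × ℝ} {s : ℝ} (hs : 0 < s) (hξ : ξ ∈ frontier Ω)
    (hξs : ξ + (0, s) ∈ Ω) : ψ ξ < u (ξ + (0, s)) := by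
  obtain ⟨t, ht, habove⟩ := exists_pos_add_smul_mem_frontier hΩo hΩb hξs
    (v := ((0, 1) : ℝ × ℝ)) (by simp)
  have htop : ξ + (0, s) + t • (0, 1) = ξ + (0, s + t) := by ext <;> simp [add_assoc]
  exact (hu ξ hξ (s + t) (by positivity) (htop ▸ habove) s ⟨hs, by linarith⟩ hξs).1

lemma boundary_lt_boundary (hu : BetweenEndpoints Ω ψ Ω u) (hΩo : IsOpen Ω)
    (hψ : BetweenEndpoints Ω ψ (frontier Ω) ψ) {ξ : ℝ × ℝ} {s r : ℝ} (hr : r ∈ Set.Ioo 0 s)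
    (hξ : ξ ∈ frontier Ω) (hξr : ξ + (0, r) ∈ closure Ω) (hξs : ξ + (0, s) ∈ frontier Ω) :
    ψ ξ < ψ (ξ + (0, s)) := by
  have hs : 0 < s := hr.1.trans hr.2
  by_cases hmem : ξ + (0, r) ∈ Ω
  · obtain ⟨hlo, hhi⟩ := hu ξ hξ s hs hξs r hr hmem
    exact hlo.trans hhi
  · obtain ⟨hlo, hhi⟩ := hψ ξ hξ s hs hξs r hr (hΩo.frontier_eq ▸ ⟨hξr, hmem⟩)
    exact hlo.trans hhi

end BetweenEndpoints

/-- Classical solutions in `Ω` of `u_xx + k(x) u_yy + f(x, u) = 0` with `u = ψ` on the boundary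
which satisfy the ordering condition in the interior. The coefficients may depend on `x` only, so
that the equation is invariant under vertical translations. -/
structure IsOrderedSolution (k : ℝ → ℝ) (f : ℝ → ℝ → ℝ) (Ω : Set (ℝ × ℝ)) (ψ u : ℝ × ℝ → ℝ) :
    Prop where
  continuousOn : ContinuousOn u (closure Ω)
  contDiffOn : ContDiffOn ℝ 2 u Ω
  equation : ∀ p ∈ Ω, pXX u p + k p.1 * pYY u p + f p.1 (u p) = 0
  boundary : ∀ p ∈ frontier Ω, u p = ψ p
  between : BetweenEndpoints Ω ψ Ω u

namespace IsOrderedSolution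

variable {k : ℝ → ℝ} {f : ℝ → ℝ → ℝ} {L : ℝ} {Ω : Set (ℝ × ℝ)} {ψ a b : ℝ × ℝ → ℝ}

lemma lt_slide_of_not_mem_slideOverlap (ha : IsOrderedSolution k f Ω ψ a)
    (hb : IsOrderedSolution k f Ω ψ b) (hψ : BetweenEndpoints Ω ψ (frontier Ω) ψ)
    (hΩo : IsOpen Ω) (hΩb : Bornology.IsBounded Ω) (hΩT : TConvex Ω) {τ : ℝ} (hτ : 0 < τ)
    {p : ℝ × ℝ} {s : ℝ} (hz : (p, s) ∈ closure (verticalPairs Ω τ)) (hp : p ∉ slideOverlap Ω s) :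
    a p < b (p + (0, s)) := by
  obtain ⟨hle, hbot, htop⟩ := closure_verticalPairs_subset Ω τ hz
  have hs : 0 < s := hτ.trans_le hle
  have hfrontier {q : ℝ × ℝ} (hq : q ∈ closure Ω) (hq' : q ∉ Ω) : q ∈ frontier Ω :=
    hΩo.frontier_eq ▸ ⟨hq, hq'⟩
  by_cases hpΩ : p ∈ Ω
  · have htop' := hfrontier htop fun h => hp ⟨hpΩ, h⟩
    exact hb.boundary _ htop' ▸ ha.between.lt_boundary_above hΩo hΩb hs hpΩ htop'
  have hbot' := hfrontier hbot hpΩ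
  rw [ha.boundary p hbot']
  by_cases hpsΩ : p + (0, s) ∈ Ω
  · exact hb.between.boundary_below_lt hΩo hΩb hs hbot' hpsΩ
  · have htop' := hfrontier htop hpsΩ
    exact hb.boundary _ htop' ▸ ha.between.boundary_lt_boundary hΩo hψ
      ⟨half_pos hs, half_lt_self hs⟩ hbot' (hΩT.midpoint_mem_closure hτ hz) htop'

lemma slide_sub_supersolution (ha : IsOrderedSolution k f Ω ψ a)
    (hb : IsOrderedSolution k f Ω ψ b) (hΩo : IsOpen Ω)
    (hf : ∀ x, Monotone fun y => f x y + L * y) {t : ℝ} {p : ℝ × ℝ} (hp : p ∈ slideOverlap Ω t)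
    (hle : a p ≤ b (p + (0, t))) :
    pXX (fun q => b (q + (0, t)) - a q) p + k p.1 * pYY (fun q => b (q + (0, t)) - a q) p ≤
      L * (b (p + (0, t)) - a p) := by
  have hb_slide : ContDiffAt ℝ 2 (fun q => b (q + (0, t))) p :=
    (hb.contDiffOn.contDiffAt (hΩo.mem_nhds hp.2)).comp p (f := fun q => q + (0, t)) (by fun_prop)
  have ha_at : ContDiffAt ℝ 2 a p := ha.contDiffOn.contDiffAt (hΩo.mem_nhds hp.1)
  rw [pXX_sub hb_slide ha_at, pYY_sub hb_slide ha_at, pXX_comp_add_vertical,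
    pYY_comp_add_vertical]
  have heq_b := hb.equation (p + (0, t)) hp.2
  have hfst : (p + (0, t)).1 = p.1 := add_zero p.1
  rw [hfst] at heq_b
  have hmono := hf p.1 hle
  linarith [ha.equation p hp.1]

lemma lt_slide_of_le_slide (ha : IsOrderedSolution k f Ω ψ a) (hb : IsOrderedSolution k f Ω ψ b)
    (hψ : BetweenEndpoints Ω ψ (frontier Ω) ψ) (hΩo : IsOpen Ω) (hΩb : Bornology.IsBounded Ω)
    (hΩT : TConvex Ω) (hk : ∀ x, 0 ≤ k x) (hf : ∀ x, Monotone fun y => f x y + L * y) {t : ℝ}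
    (ht : 0 < t) (hle : ∀ p ∈ slideOverlap Ω t, a p ≤ b (p + (0, t))) :
    ∀ p ∈ slideOverlap Ω t, a p < b (p + (0, t)) := by
  have hDo : IsOpen (slideOverlap Ω t) := isOpen_slideOverlap hΩo t
  have hpair {p : ℝ × ℝ} (hp : p ∈ closure (slideOverlap Ω t)) :=
    closure_verticalPairs_subset Ω t (mem_closure_verticalPairs_of_mem_closure_slideOverlap hp)
  suffices h : ∀ p ∈ slideOverlap Ω t, 0 < b (p + (0, t)) - a p from
    fun p hp => sub_pos.mp (h p hp)
  refine pos_of_nonneg_of_pos_frontier hDo (hΩb.subset fun p hp => hp.1) (fun p _ => hk p.1)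
    ?_ ?_ (fun p hp => ha.slide_sub_supersolution hb hΩo hf hp (hle p hp))
    (fun p hp => sub_nonneg.mpr (hle p hp)) ?_
  · exact (hb.continuousOn.comp (f := fun p => p + (0, t)) (by fun_prop)
      fun p hp => (hpair hp).2.2).sub (ha.continuousOn.mono fun p hp => (hpair hp).2.1)
  · exact (hb.contDiffOn.comp (f := fun p => p + (0, t)) (by fun_prop) fun p hp => hp.2).sub
      (ha.contDiffOn.mono fun p hp => hp.1)
  · intro p hp
    rw [hDo.frontier_eq] at hp
    exact sub_pos.mpr <| ha.lt_slide_of_not_mem_slideOverlap hb hψ hΩo hΩb hΩT ht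
      (mem_closure_verticalPairs_of_mem_closure_slideOverlap hp.1) hp.2

theorem lt_slide (ha : IsOrderedSolution k f Ω ψ a) (hb : IsOrderedSolution k f Ω ψ b)
    (hψ : BetweenEndpoints Ω ψ (frontier Ω) ψ) (hΩo : IsOpen Ω) (hΩb : Bornology.IsBounded Ω)
    (hΩT : TConvex Ω) (hk : ∀ x, 0 ≤ k x) (hf : ∀ x, Monotone fun y => f x y + L * y) {ξ : ℝ × ℝ}
    {τ : ℝ} (hτ : 0 < τ) (hξ : ξ ∈ slideOverlap Ω τ) : a ξ < b (ξ + (0, τ)) := by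
  by_contra! hξ_bad
  set T := closure (verticalPairs Ω τ)
  have hT : IsCompact T := isCompact_closure_verticalPairs hΩb τ
  have hsub := closure_verticalPairs_subset Ω τ
  have hbad_compact : IsCompact {z ∈ T | b (z.1 + (0, z.2)) ≤ a z.1} :=
    hT.of_isClosed_subset (hT.isClosed.isClosed_le
      (hb.continuousOn.comp (f := fun z : (ℝ × ℝ) × ℝ => z.1 + (0, z.2)) (by fun_prop)
        fun z hz => (hsub hz).2.2)
      (ha.continuousOn.comp (by fun_prop) fun z hz => (hsub hz).2.1)) fun z hz => hz.1
  obtain ⟨⟨p, t⟩, ⟨hpT, hp_bad⟩, hmax⟩ := hbad_compact.exists_isMaxOn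
    ⟨(ξ, τ), subset_closure ⟨le_rfl, hξ⟩, hξ_bad⟩ continuous_snd.continuousOn
  have hτt : τ ≤ t := (hsub hpT).1
  have hgood {q : ℝ × ℝ} {s : ℝ} (hs : t < s) (hq : q ∈ slideOverlap Ω s) :
      a q < b (q + (0, s)) := by
    by_contra! hq_bad
    have hst : s ≤ t := isMaxOn_iff.mp hmax (q, s) ⟨subset_closure ⟨hτt.trans hs.le, hq⟩, hq_bad⟩
    exact hst.not_gt hs
  have hle : ∀ q ∈ slideOverlap Ω t, a q ≤ b (q + (0, t)) := fun q hq =>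
    le_of_forall_gt_le_slide hΩo hb.contDiffOn.continuousOn hq.2
      fun s hs hqs => (hgood hs ⟨hq.1, hqs⟩).le
  have hp : p ∈ slideOverlap Ω t := by
    by_contra hp
    exact hp_bad.not_gt (ha.lt_slide_of_not_mem_slideOverlap hb hψ hΩo hΩb hΩT hτ hpT hp)
  exact hp_bad.not_gt
    (ha.lt_slide_of_le_slide hb hψ hΩo hΩb hΩT hk hf (hτ.trans_le hτt) hle p hp)

lemma le_of_ordered (ha : IsOrderedSolution k f Ω ψ a) (hb : IsOrderedSolution k f Ω ψ b)
    (hψ : BetweenEndpoints Ω ψ (frontier Ω) ψ) (hΩo : IsOpen Ω) (hΩb : Bornology.IsBounded Ω)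
    (hΩT : TConvex Ω) (hk : ∀ x, 0 ≤ k x) (hf : ∀ x, Monotone fun y => f x y + L * y)
    {p : ℝ × ℝ} (hp : p ∈ closure Ω) : a p ≤ b p := by
  by_cases hpΩ : p ∈ Ω
  · have hzero : p + (0, 0) = p := add_zero p
    have hle := le_of_forall_gt_le_slide hΩo hb.contDiffOn.continuousOn (hzero.symm ▸ hpΩ)
      fun s hs hps => (ha.lt_slide hb hψ hΩo hΩb hΩT hk hf hs ⟨hpΩ, hps⟩).le
    rwa [hzero] at hle
  · have hpf : p ∈ frontier Ω := hΩo.frontier_eq ▸ ⟨hp, hpΩ⟩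
    rw [ha.boundary p hpf, hb.boundary p hpf]

end IsOrderedSolution

theorem sliding_monotonicity_general {k : ℝ → ℝ} (hk : ∀ x, 0 ≤ k x) {f : ℝ → ℝ → ℝ} {L : ℝ}
    (hf : ∀ x, Monotone fun y => f x y + L * y) {Ω : Set (ℝ × ℝ)} (hΩo : IsOpen Ω)
    (hΩb : Bornology.IsBounded Ω) (hΩT : TConvex Ω) {ψ u : ℝ × ℝ → ℝ}
    (hψ : BetweenEndpoints Ω ψ (frontier Ω) ψ) (hu : IsOrderedSolution k f Ω ψ u) :
    (∀ (ξ : ℝ × ℝ) (s₁ s₂ : ℝ), s₁ < s₂ → ξ + (0, s₁) ∈ Ω → ξ + (0, s₂) ∈ Ω →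
      u (ξ + (0, s₁)) < u (ξ + (0, s₂))) ∧
    ∀ v : ℝ × ℝ → ℝ, IsOrderedSolution k f Ω ψ v → Set.EqOn v u (closure Ω) := by
  refine ⟨fun ξ s₁ s₂ hs h₁ h₂ => ?_, fun v hv p hp => le_antisymm
    (hv.le_of_ordered hu hψ hΩo hΩb hΩT hk hf hp) (hu.le_of_ordered hv hψ hΩo hΩb hΩT hk hf hp)⟩
  have hslide : ξ + (0, s₁) + (0, s₂ - s₁) = ξ + (0, s₂) := by ext <;> simp [add_assoc]
  rw [← hslide] at h₂ ⊢
  exact hu.lt_slide hu hψ hΩo hΩb hΩT hk hf (sub_pos.mpr hs) ⟨h₁, h₂⟩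

lemma monotone_add_mul_of_lipschitzWith {f : ℝ → ℝ} {L : NNReal} (hf : LipschitzWith L f) :
    Monotone fun y => f y + L * y := by
  intro y z hyz
  have hdist := hf.dist_le_mul y z
  rw [Real.dist_eq, Real.dist_eq, abs_sub_comm y, abs_of_nonneg (sub_nonneg.mpr hyz)] at hdist
  linarith [le_abs_self (f y - f z)]

/-- the sliding-method monotonicity theorem (Theorem 5.1 of the paper).
On a bounded `T`-convex domain, a solution of `Δ_G u + f(u) = 0` with boundary datum
`ψ` satisfying the ordering conditions along vertical segments is strictly increasing in
the vertical direction, and is the unique such solution. -/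
theorem sliding_monotonicity (Ω : Set (ℝ × ℝ)) (hΩo : IsOpen Ω) (hΩc : IsConnected Ω)
    (hΩb : Bornology.IsBounded Ω) (hΩT : TConvex Ω)
    (f : ℝ → ℝ) (L : NNReal) (hf : LipschitzWith L f)
    (ψ : ℝ × ℝ → ℝ) (u : ℝ × ℝ → ℝ)
    (hu_cont : ContinuousOn u (closure Ω)) (hu_reg : ContDiffOn ℝ 2 u Ω)
    (hu_sol : ∀ p ∈ Ω, grushinLap u p + f (u p) = 0)
    (hu_bc : ∀ p ∈ frontier Ω, u p = ψ p)
    (hord : ∀ ξ₁ ∈ frontier Ω, ∀ α > (0 : ℝ), ξ₁ + (0, α) ∈ frontier Ω →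
      ∀ s ∈ Set.Ioo (0 : ℝ) α,
        (ξ₁ + (0, s) ∈ Ω →
          ψ ξ₁ < u (ξ₁ + (0, s)) ∧ u (ξ₁ + (0, s)) < ψ (ξ₁ + (0, α))) ∧
        (ξ₁ + (0, s) ∈ frontier Ω →
          ψ ξ₁ < ψ (ξ₁ + (0, s)) ∧ ψ (ξ₁ + (0, s)) < ψ (ξ₁ + (0, α)))) :
    (∀ (ξ : ℝ × ℝ) (s₁ s₂ : ℝ), 0 < s₁ → s₁ < s₂ →
        ξ + (0, s₁) ∈ Ω → ξ + (0, s₂) ∈ Ω →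
        u (ξ + (0, s₁)) < u (ξ + (0, s₂))) ∧
    (∀ v : ℝ × ℝ → ℝ, ContinuousOn v (closure Ω) → ContDiffOn ℝ 2 v Ω →
        (∀ p ∈ Ω, grushinLap v p + f (v p) = 0) →
        (∀ p ∈ frontier Ω, v p = ψ p) →
        (∀ ξ₁ ∈ frontier Ω, ∀ α > (0 : ℝ), ξ₁ + (0, α) ∈ frontier Ω →
          ∀ s ∈ Set.Ioo (0 : ℝ) α, ξ₁ + (0, s) ∈ Ω →
            ψ ξ₁ < v (ξ₁ + (0, s)) ∧ v (ξ₁ + (0, s)) < ψ (ξ₁ + (0, α))) →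
        ∀ p ∈ closure Ω, v p = u p) := by
  obtain ⟨hmono, hunique⟩ := sliding_monotonicity_general (k := fun x => x ^ 2) sq_nonneg
    (fun _ => monotone_add_mul_of_lipschitzWith hf) hΩo hΩb hΩT
    (fun ξ hξ α hα hξα s hs => (hord ξ hξ α hα hξα s hs).2)
    ⟨hu_cont, hu_reg, hu_sol, hu_bc, fun ξ hξ α hα hξα s hs => (hord ξ hξ α hα hξα s hs).1⟩
  exact ⟨fun ξ s₁ s₂ _ => hmono ξ s₁ s₂, fun v hv_cont hv_reg hv_sol hv_bc hv_between =>
    hunique v ⟨hv_cont, hv_reg, hv_sol, hv_bc, hv_between⟩⟩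
end
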